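/- There exist a constant c > 0 and a threshold d₀ ∈ ℕ such that for every dimension d ≥ d₀, every δ ∈ [0,1], and every M-bit memory-constrained deterministic algorithm that, using T queries, is guaranteed to solve the feasibility problem over the unit ball of ℝ^d with accuracy ε = 1/(48 d² √d), one has: either M ≥ d^{2−δ} or T ≥ c · d^{1+δ} / (log d)³. -/

import Mathlib

open scoped RealInnerProductSpace

/-- An `M`-bit memory-constrained deterministic algorithm interacting with an oracle
with query space `S` and response space `R`: a query function and an update function. -/
structure MemAlg (M : ℕ) (S R : Type) where
  query : (Fin M → Bool) → S
  update : (Fin M → Bool) → S → R → (Fin M → Bool)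

namespace MemAlg

variable {M : ℕ} {S R : Type}

/-- The memory state after `t` iterations, interacting with the oracle `O`;
the initial memory state is `0^M`. -/
def mem (alg : MemAlg M S R) (O : S → R) : ℕ → (Fin M → Bool)
  | 0 => fun _ => false
  | t + 1 =>
      alg.update (alg.mem O t) (alg.query (alg.mem O t)) (O (alg.query (alg.mem O t)))

/-- The output of the algorithm after `T` queries: its last query
`q_T = ψ_query (Memory_{T-1})`. -/
def output (alg : MemAlg M S R) (O : S → R) (T : ℕ) : S :=
  alg.query (alg.mem O (T - 1))

end MemAlg

/-- `O` is a separation oracle for the set `Q`: for each query `x` it either returns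
`none` (the symbol `Success`), which is only allowed when `x ∈ Q`, or a vector `g`
separating `x` from `Q`, i.e. `⟪g, x - x'⟫ > 0` for all `x' ∈ Q`. -/
def IsSeparationOracle {d : ℕ} (Q : Set (EuclideanSpace ℝ (Fin d)))
    (O : EuclideanSpace ℝ (Fin d) → Option (EuclideanSpace ℝ (Fin d))) : Prop :=
  ∀ x, (O x = none → x ∈ Q) ∧
    ∀ g, O x = some g → ∀ x' ∈ Q, 0 < ⟪g, x - x'⟫

/-- The algorithm `alg`, using `T` queries, is guaranteed to solve the feasibility problem
over the unit ball of `ℝ^d` with accuracy `ε`: for every convex set `Q ⊆ B_d(0,1)`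
containing a ball of radius `ε` centered at some point of the unit ball, and every
separation oracle for `Q`, the output lies in `Q`. -/
def SolvesFeasibility {M : ℕ} (d : ℕ)
    (alg : MemAlg M (EuclideanSpace ℝ (Fin d)) (Option (EuclideanSpace ℝ (Fin d))))
    (T : ℕ) (ε : ℝ) : Prop :=
  ∀ Q : Set (EuclideanSpace ℝ (Fin d)),
    Convex ℝ Q → Q ⊆ Metric.closedBall (0 : EuclideanSpace ℝ (Fin d)) 1 →
    (∃ xstar ∈ Metric.closedBall (0 : EuclideanSpace ℝ (Fin d)) 1,
        Metric.closedBall xstar ε ⊆ Q) →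
    ∀ O : EuclideanSpace ℝ (Fin d) → Option (EuclideanSpace ℝ (Fin d)),
      IsSeparationOracle Q O → alg.output O T ∈ Q

/-!
An adversary answers each query with the first violated cut in a list: the unit ball, a
thin slab around the orthogonal complement of each row of an `n`-row matrix drawn from a grid, and
finally deep halfspaces whose normals it chooses adaptively. Level `j` consists of the ball, the
slabs and the first `j` halfspaces. The normals come in groups of `k`, and within a group a normal
is orthogonal to its predecessors and to the points at which the algorithm first satisfied the
earlier levels. Each level therefore costs a new query, while the resulting feasible set still
contains a ball of the prescribed radius, so the algorithm has to pass all levels.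

If `T` is small, some group is passed in fewer than `h` queries, so during it at most `h` of the
rows are ever reported. The memory at the start of this window, together with a short transcript,
then determines the `k` level points of the window. These points are nearly orthogonal to every row,
and their inner products with the normals of the group form an almost triangular matrix. Hence two
matrices with the same transcript cannot differ by bounded integer combinations of the normals in
their unreported rows. Shearing by such combinations makes the matrices sharing a transcript rare:
their proportion decays like `S ^ (-k * (n - h))`. As there are about `2 ^ M` transcripts, this is
impossible when `M` is well below `k * n`.
-/

/-! ### Cuts and their oracle -/

section Cuts

variable {E : Type} [NormedAddCommGroup E] [InnerProductSpace ℝ E]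

/-- A convex constraint `x ∈ body` together with the separating direction that an oracle
reports at each violating point. -/
structure Cut (E : Type) [NormedAddCommGroup E] [InnerProductSpace ℝ E] where
  body : Set E
  normal : E → E
  convex_body : Convex ℝ body
  inner_normal_pos : ∀ x ∉ body, ∀ y ∈ body, 0 < ⟪normal x, x - y⟫

namespace Cut

/-- The constraint `‖x‖ ≤ 1`. -/
def unitBall : Cut E where
  body := Metric.closedBall 0 1
  normal x := x
  convex_body := convex_closedBall 0 1
  inner_normal_pos x hx y hy := by
    rw [mem_closedBall_zero_iff] at hx hy
    rw [inner_sub_right, real_inner_self_eq_norm_sq]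
    nlinarith [real_inner_le_norm x y, norm_nonneg x, norm_nonneg y]

/-- The constraint `|⟪a, x⟫| ≤ η`. -/
def slab (a : E) (η : ℝ) : Cut E where
  body := {x | |⟪a, x⟫| ≤ η}
  normal x := ⟪a, x⟫ • a
  convex_body := by
    simpa [Set.preimage, ← Real.norm_eq_abs] using
      (convex_closedBall (0 : ℝ) η).linear_preimage (innerₗ E a)
  inner_normal_pos x hx y hy := by
    have h : |⟪a, y⟫| < |⟪a, x⟫| := lt_of_le_of_lt hy (not_le.mp hx)
    rw [real_inner_smul_left, inner_sub_right]
    nlinarith [le_abs_self (⟪a, x⟫ * ⟪a, y⟫), abs_mul ⟪a, x⟫ ⟪a, y⟫, abs_mul_abs_self ⟪a, x⟫,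
      abs_nonneg ⟪a, x⟫, abs_nonneg ⟪a, y⟫]

/-- The constraint `⟪v, x⟫ ≤ -σ`. -/
def halfspace (v : E) (σ : ℝ) : Cut E where
  body := {x | ⟪v, x⟫ ≤ -σ}
  normal _ := v
  convex_body := convex_halfSpace_le (innerₗ E v).isLinear (-σ)
  inner_normal_pos x hx y hy := by
    rw [inner_sub_right]
    exact sub_pos.mpr (lt_of_le_of_lt hy (not_le.mp hx))

end Cut

/-- The set cut out by the first `J` members of a sequence of cuts. -/
def region (C : ℕ → Cut E) (J : ℕ) : Set E := {x | ∀ r < J, x ∈ (C r).body}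

/-- The least index below `J` of a cut violated by `x`, or `J` if there is none. -/
noncomputable def firstViolated (C : ℕ → Cut E) (J : ℕ) (x : E) : ℕ :=
  sInf {r | r < J → x ∉ (C r).body}

/-- The oracle for `region C J` that reports the first violated cut. -/
noncomputable def cutOracle (C : ℕ → Cut E) (J : ℕ) (x : E) : Option E :=
  if firstViolated C J x < J then some ((C (firstViolated C J x)).normal x) else none

variable {C C' : ℕ → Cut E} {J J' r : ℕ} {x : E}

theorem firstViolated_le : firstViolated C J x ≤ J :=
  Nat.sInf_le fun h => absurd h (lt_irrefl J)

theorem notMem_body_firstViolated (h : firstViolated C J x < J) :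
    x ∉ (C (firstViolated C J x)).body :=
  Nat.sInf_mem (s := {r | r < J → x ∉ (C r).body}) ⟨J, fun h => absurd h (lt_irrefl J)⟩ h

theorem mem_body_of_lt_firstViolated (h : r < firstViolated C J x) : x ∈ (C r).body := by
  by_contra hx
  exact Nat.notMem_of_lt_sInf h fun _ => hx

theorem firstViolated_lt_iff : firstViolated C J x < J ↔ x ∉ region C J := by
  refine ⟨fun h hx => notMem_body_firstViolated h (hx _ h), fun h => ?_⟩
  contrapose! h
  exact fun r hr => mem_body_of_lt_firstViolated (hr.trans_le h)

theorem region_antitone (C : ℕ → Cut E) : Antitone (region C) :=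
  fun _ _ h _ hx r hr => hx r (hr.trans_le h)

theorem region_congr (h : ∀ r < J, C r = C' r) : region C J = region C' J := by
  ext x
  exact forall₂_congr fun r hr => by rw [h r hr]

theorem convex_region (C : ℕ → Cut E) (J : ℕ) : Convex ℝ (region C J) := by
  simpa only [region, Set.ofPred_forall, Set.ofPred_mem_eq] using
    convex_iInter fun r => convex_iInter fun _ : r < J => (C r).convex_body

theorem firstViolated_congr (h : ∀ r < J, C r = C' r) :
    firstViolated C J = firstViolated C' J := by
  ext x
  unfold firstViolated
  congr 1
  ext r
  exact forall_congr' fun hr => by rw [h r hr]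

theorem cutOracle_eq_of_firstViolated_eq (h : firstViolated C J x = firstViolated C' J x)
    (hC : firstViolated C J x < J → C (firstViolated C J x) = C' (firstViolated C J x)) :
    cutOracle C J x = cutOracle C' J x := by
  unfold cutOracle
  rw [← h]
  split_ifs with hx
  · rw [hC hx]
  · rfl

theorem cutOracle_congr (h : ∀ r < J, C r = C' r) : cutOracle C J = cutOracle C' J := by
  ext1 x
  exact cutOracle_eq_of_firstViolated_eq (by rw [firstViolated_congr h]) (h _)

theorem firstViolated_eq_of_le (hJ : J ≤ J') (hx : x ∉ region C J) :
    firstViolated C J x = firstViolated C J' x := by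
  have hlt := firstViolated_lt_iff.mpr hx
  refine le_antisymm (not_lt.mp fun h => ?_) (not_lt.mp fun h => ?_)
  · exact notMem_body_firstViolated ((h.trans hlt).trans_le hJ) (mem_body_of_lt_firstViolated h)
  · exact notMem_body_firstViolated hlt (mem_body_of_lt_firstViolated h)

theorem cutOracle_eq_of_le (hJ : J ≤ J') (hx : x ∉ region C J) :
    cutOracle C J x = cutOracle C J' x := by
  have hlt := firstViolated_lt_iff.mpr hx
  simp only [cutOracle, ← firstViolated_eq_of_le hJ hx, hlt, hlt.trans_le hJ, if_true]

end Cuts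

theorem isSeparationOracle_cutOracle {d : ℕ} (C : ℕ → Cut (EuclideanSpace ℝ (Fin d))) (J : ℕ) :
    IsSeparationOracle (region C J) (cutOracle C J) := by
  intro x
  unfold cutOracle
  split_ifs with h
  · refine ⟨fun hnone => by simp at hnone, fun g hg y hy => ?_⟩
    rw [← Option.some.inj hg]
    exact (C _).inner_normal_pos x (notMem_body_firstViolated h) y (hy _ h)
  · exact ⟨fun _ => not_not.mp (mt firstViolated_lt_iff.mpr h), fun g hg => by simp at hg⟩

/-! ### Runs of an algorithm against a growing list of cuts -/

section Runs

variable {M : ℕ} {S R : Type}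

/-- The query issued from the memory state after `τ` iterations. -/
def MemAlg.queryAt (alg : MemAlg M S R) (O : S → R) (τ : ℕ) : S := alg.query (alg.mem O τ)

theorem MemAlg.mem_add_one (alg : MemAlg M S R) (O : S → R) (τ : ℕ) :
    alg.mem O (τ + 1) = alg.update (alg.mem O τ) (alg.queryAt O τ) (O (alg.queryAt O τ)) :=
  rfl

variable {E : Type} [NormedAddCommGroup E] [InnerProductSpace ℝ E]
  (alg : MemAlg M E (Option E)) {C C' : ℕ → Cut E} {J J' : ℕ}

/-- The first time at which the run against `cutOracle C J` queries a point of `region C J`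
(`0` if this never happens). -/
noncomputable def hitTime (C : ℕ → Cut E) (J : ℕ) : ℕ :=
  sInf {τ | alg.queryAt (cutOracle C J) τ ∈ region C J}

/-- The query issued at time `hitTime alg C J`. -/
noncomputable def hitPoint (C : ℕ → Cut E) (J : ℕ) : E :=
  alg.queryAt (cutOracle C J) (hitTime alg C J)

theorem hitTime_congr (h : ∀ r < J, C r = C' r) : hitTime alg C J = hitTime alg C' J := by
  unfold hitTime
  rw [cutOracle_congr h, region_congr h]

theorem hitPoint_congr (h : ∀ r < J, C r = C' r) : hitPoint alg C J = hitPoint alg C' J := by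
  unfold hitPoint
  rw [cutOracle_congr h, hitTime_congr alg h]

variable {alg}

theorem hitTime_le {τ : ℕ} (h : alg.queryAt (cutOracle C J) τ ∈ region C J) :
    hitTime alg C J ≤ τ :=
  Nat.sInf_le h

theorem hitPoint_mem {τ : ℕ} (h : alg.queryAt (cutOracle C J) τ ∈ region C J) :
    hitPoint alg C J ∈ region C J :=
  Nat.sInf_mem (s := {τ | alg.queryAt (cutOracle C J) τ ∈ region C J}) ⟨τ, h⟩

theorem queryAt_notMem_region_of_lt_hitTime {τ : ℕ} (h : τ < hitTime alg C J) :
    alg.queryAt (cutOracle C J) τ ∉ region C J :=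
  Nat.notMem_of_lt_sInf h

-- Until the shorter list of cuts is satisfied, both oracles report the same cut.
theorem mem_cutOracle_eq_of_le (hJ : J ≤ J') {τ : ℕ} (hτ : τ ≤ hitTime alg C J) :
    alg.mem (cutOracle C J) τ = alg.mem (cutOracle C J') τ := by
  induction τ with
  | zero => rfl
  | succ τ ih =>
    have hmem := ih (Nat.le_of_succ_le hτ)
    have hquery : alg.queryAt (cutOracle C J) τ = alg.queryAt (cutOracle C J') τ := by
      unfold MemAlg.queryAt
      rw [hmem]
    have hx := queryAt_notMem_region_of_lt_hitTime (Nat.lt_of_succ_le hτ)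
    rw [MemAlg.mem_add_one, MemAlg.mem_add_one, hmem, cutOracle_eq_of_le hJ hx, hquery]

theorem queryAt_cutOracle_eq_of_le (hJ : J ≤ J') {τ : ℕ} (hτ : τ ≤ hitTime alg C J) :
    alg.queryAt (cutOracle C J) τ = alg.queryAt (cutOracle C J') τ := by
  unfold MemAlg.queryAt
  rw [mem_cutOracle_eq_of_le hJ hτ]

theorem hitTime_lt_of_hitPoint_notMem (hJ : J ≤ J') (hmem : hitPoint alg C J' ∈ region C J')
    (hnot : hitPoint alg C J ∉ region C J') : hitTime alg C J < hitTime alg C J' := by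
  by_contra! hle
  have heq : hitPoint alg C J' = alg.queryAt (cutOracle C J) (hitTime alg C J') :=
    (queryAt_cutOracle_eq_of_le hJ hle).symm
  have hhit : hitTime alg C J = hitTime alg C J' :=
    le_antisymm (hitTime_le (heq ▸ region_antitone C hJ hmem)) hle
  exact hnot (by rwa [hitPoint, hhit, ← heq])

/-- The index of the cut reported at time `τ` of the run against `cutOracle C J`. -/
noncomputable def reportedIndex (alg : MemAlg M E (Option E)) (C : ℕ → Cut E) (J τ : ℕ) : ℕ :=
  firstViolated C J (alg.queryAt (cutOracle C J) τ)

-- A run is decoded from one memory state, the reported indices, and the cuts they refer to.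
theorem mem_add_eq_of_reportedIndex_eq {τ τ' h s : ℕ} (hs : s ≤ h)
    (hmem : alg.mem (cutOracle C J) τ = alg.mem (cutOracle C' J) τ')
    (hidx : ∀ s < h, reportedIndex alg C J (τ + s) = reportedIndex alg C' J (τ' + s))
    (hcut : ∀ s < h, reportedIndex alg C J (τ + s) < J →
      C (reportedIndex alg C J (τ + s)) = C' (reportedIndex alg C J (τ + s))) :
    alg.mem (cutOracle C J) (τ + s) = alg.mem (cutOracle C' J) (τ' + s) := by
  induction s with
  | zero => exact hmem
  | succ s ih =>
    have hprev := ih (Nat.le_of_succ_le hs)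
    have hquery : alg.queryAt (cutOracle C J) (τ + s) = alg.queryAt (cutOracle C' J) (τ' + s) := by
      unfold MemAlg.queryAt
      rw [hprev]
    have hresp : cutOracle C J (alg.queryAt (cutOracle C J) (τ + s)) =
        cutOracle C' J (alg.queryAt (cutOracle C J) (τ + s)) :=
      cutOracle_eq_of_firstViolated_eq ((hidx s hs).trans (by rw [reportedIndex, hquery]))
        (hcut s hs)
    rw [← Nat.add_assoc, ← Nat.add_assoc, MemAlg.mem_add_one, MemAlg.mem_add_one, hprev, hresp,
      hquery]

theorem hitPoint_eq_of_reportedIndex_eq {τ τ' h s : ℕ} (hJ : J ≤ J') (hs : s ≤ h)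
    (hmem : alg.mem (cutOracle C J') τ = alg.mem (cutOracle C' J') τ')
    (hidx : ∀ s < h, reportedIndex alg C J' (τ + s) = reportedIndex alg C' J' (τ' + s))
    (hcut : ∀ s < h, reportedIndex alg C J' (τ + s) < J' →
      C (reportedIndex alg C J' (τ + s)) = C' (reportedIndex alg C J' (τ + s)))
    (hhit : hitTime alg C J = τ + s) (hhit' : hitTime alg C' J = τ' + s) :
    hitPoint alg C J = hitPoint alg C' J := by
  rw [hitPoint, hitPoint, queryAt_cutOracle_eq_of_le hJ le_rfl,
    queryAt_cutOracle_eq_of_le hJ le_rfl, hhit, hhit', MemAlg.queryAt, MemAlg.queryAt,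
    mem_add_eq_of_reportedIndex_eq hs hmem hidx hcut]

end Runs

/-! ### The sequence ball, slabs, halfspaces -/

section CutSeq

variable {E : Type} [NormedAddCommGroup E] [InnerProductSpace ℝ E] {n : ℕ} {η σ : ℝ}
  {a a' : Fin n → E} {v v' : ℕ → E}

/-- The cuts answered by the adversary, in order of priority: the unit ball, the slabs
`|⟪a i, x⟫| ≤ η`, and the halfspaces `⟪v j, x⟫ ≤ -σ`. -/
def cutSeq (η σ : ℝ) (a : Fin n → E) (v : ℕ → E) : ℕ → Cut E
  | 0 => Cut.unitBall
  | r + 1 => if h : r < n then Cut.slab (a ⟨r, h⟩) η else Cut.halfspace (v (r - n)) σ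

theorem mem_body_cutSeq_slab {x : E} (i : Fin n) :
    x ∈ (cutSeq η σ a v (i + 1)).body ↔ |⟪a i, x⟫| ≤ η := by
  simp [cutSeq, Cut.slab]

theorem mem_body_cutSeq_halfspace {x : E} (j : ℕ) :
    x ∈ (cutSeq η σ a v (n + j + 1)).body ↔ ⟪v j, x⟫ ≤ -σ := by
  simp [cutSeq, Cut.halfspace]

theorem mem_region_cutSeq {x : E} {N : ℕ} :
    x ∈ region (cutSeq η σ a v) (n + N + 1) ↔
      ‖x‖ ≤ 1 ∧ (∀ i, |⟪a i, x⟫| ≤ η) ∧ ∀ j < N, ⟪v j, x⟫ ≤ -σ := by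
  constructor
  · intro h
    refine ⟨mem_closedBall_zero_iff.mp (h 0 (by omega)), fun i => ?_, fun j hj => ?_⟩
    · exact (mem_body_cutSeq_slab i).mp (h _ (by omega))
    · exact (mem_body_cutSeq_halfspace j).mp (h _ (by omega))
  · rintro ⟨hball, hslab, hhalf⟩ (_ | r) hr
    · exact mem_closedBall_zero_iff.mpr hball
    · rcases lt_or_ge r n with hrn | hnr
      · exact (mem_body_cutSeq_slab ⟨r, hrn⟩).mpr (hslab _)
      · obtain ⟨j, rfl⟩ := Nat.exists_eq_add_of_le hnr
        exact (mem_body_cutSeq_halfspace j).mpr (hhalf j (by omega))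

theorem region_cutSeq_subset_closedBall {N : ℕ} :
    region (cutSeq η σ a v) (n + N + 1) ⊆ Metric.closedBall 0 1 :=
  fun _ hx => mem_closedBall_zero_iff.mpr (mem_region_cutSeq.mp hx).1

theorem cutSeq_congr {N r : ℕ} (ha : ∀ i : Fin n, r = i + 1 → a i = a' i)
    (hv : ∀ j < N, v j = v' j) (hr : r < n + N + 1) :
    cutSeq η σ a v r = cutSeq η σ a' v' r := by
  rcases r with _ | r
  · rfl
  · simp only [cutSeq]
    split_ifs with h
    · rw [ha ⟨r, h⟩ rfl]
    · rw [hv (r - n) (by omega)]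

end CutSeq

/-! ### Euclidean geometry -/

section Geometry

theorem exists_norm_eq_one_inner_eq_zero {E : Type*} [NormedAddCommGroup E]
    [InnerProductSpace ℝ E] (S : Finset E) (hS : S.card < Module.finrank ℝ E) :
    ∃ u : E, ‖u‖ = 1 ∧ ∀ s ∈ S, ⟪s, u⟫ = 0 := by
  have hne : (Submodule.span ℝ (S : Set E))ᗮ ≠ ⊥ := by
    rw [Ne, Submodule.orthogonal_eq_bot_iff]
    intro htop
    have := finrank_span_finset_le_card (R := ℝ) S
    rw [Set.finrank, htop, finrank_top] at this
    omega
  obtain ⟨y, hy, hy0⟩ := Submodule.exists_mem_ne_zero_of_ne_bot hne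
  refine ⟨(‖y‖⁻¹ : ℝ) • y, norm_smul_inv_norm (𝕜 := ℝ) hy0, fun s hs => ?_⟩
  rw [real_inner_smul_right, hy s (Submodule.subset_span hs), mul_zero]

theorem exists_orthonormal_correction {E ι : Type*} [NormedAddCommGroup E]
    [InnerProductSpace ℝ E] [Fintype ι] {e g : ι → E} (he : Orthonormal ℝ e)
    (hge : ∀ i j, ⟪g i, e j⟫ = 0) {D : ℝ} (hD : D ≠ 0) {u : E} (hu : ∀ i, ⟪e i, u⟫ = 0) :
    ∃ x : E, (∀ i, ⟪g i + D • e i, x⟫ = 0) ∧ (∀ w, (∀ i, ⟪w, e i⟫ = 0) → ⟪w, x⟫ = ⟪w, u⟫) ∧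
      ‖x‖ ^ 2 = ‖u‖ ^ 2 + ∑ i, (⟪g i, u⟫ / D) ^ 2 := by
  classical
  set z : E := ∑ i, (⟪g i, u⟫ / D) • e i with hz
  have horth : ∀ w, (∀ i, ⟪w, e i⟫ = 0) → ⟪w, z⟫ = 0 := fun w hw => by
    simp [hz, inner_sum, real_inner_smul_right, hw]
  refine ⟨u - z, fun i => ?_, fun w hw => ?_, ?_⟩
  · have hez : ⟪e i, z⟫ = ⟪g i, u⟫ / D := he.inner_right_fintype _ i
    rw [inner_add_left, real_inner_smul_left, inner_sub_right, inner_sub_right, horth _ (hge i),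
      hu i, hez]
    field_simp
    ring
  · rw [inner_sub_right, horth w hw, sub_zero]
  · have huz : ⟪u, z⟫ = 0 := horth u fun i => by rw [real_inner_comm, hu i]
    have hzz : ‖z‖ ^ 2 = ∑ i, (⟪g i, u⟫ / D) ^ 2 := by
      rw [← real_inner_self_eq_norm_sq, hz, he.inner_sum]
      simp [sq]
    rw [norm_sub_sq_real, huz, hzz]
    ring

variable {ι : Type*} [Fintype ι]

theorem exists_norm_eq_one_inner_eq_zero_supported (A : Finset ι)
    (S : Finset (EuclideanSpace ℝ ι)) (hS : S.card < A.card) :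
    ∃ u : EuclideanSpace ℝ ι, ‖u‖ = 1 ∧ (∀ c ∉ A, u c = 0) ∧ ∀ s ∈ S, ⟪s, u⟫ = 0 := by
  classical
  let axes : Finset (EuclideanSpace ℝ ι) := Aᶜ.image fun c => EuclideanSpace.single c 1
  have hcard : (S ∪ axes).card < Module.finrank ℝ (EuclideanSpace ℝ ι) := by
    have h₁ := Finset.card_union_le S axes
    have h₂ : axes.card ≤ Aᶜ.card := Finset.card_image_le
    have h₃ := Finset.card_add_card_compl A
    rw [finrank_euclideanSpace]
    omega
  obtain ⟨u, hu, horth⟩ := exists_norm_eq_one_inner_eq_zero _ hcard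
  refine ⟨u, hu, fun c hc => ?_, fun s hs => horth s (Finset.mem_union_left _ hs)⟩
  have haxis := horth _ (Finset.mem_union_right S
    (Finset.mem_image_of_mem (EuclideanSpace.single · 1) (Finset.mem_compl.mpr hc)))
  simpa [EuclideanSpace.inner_single_left] using haxis

theorem euclideanNorm_le_sqrt_card_mul {x : EuclideanSpace ℝ ι} {B : ℝ} (hB : 0 ≤ B)
    (h : ∀ c, |x c| ≤ B) : ‖x‖ ≤ √(Fintype.card ι) * B := by
  rw [EuclideanSpace.norm_eq, ← Real.sqrt_sq hB, ← Real.sqrt_mul (Nat.cast_nonneg _)]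
  gcongr
  calc ∑ c, ‖x c‖ ^ 2 ≤ ∑ _c : ι, B ^ 2 :=
        Finset.sum_le_sum fun c _ => by gcongr; exact h c
    _ = Fintype.card ι * B ^ 2 := by simp

theorem inner_eq_zero_of_disjoint_support {A A' : Finset ι} (h : Disjoint A A')
    {u w : EuclideanSpace ℝ ι} (hu : ∀ c ∉ A, u c = 0) (hw : ∀ c ∉ A', w c = 0) :
    ⟪u, w⟫ = 0 := by
  rw [PiLp.inner_apply]
  refine Finset.sum_eq_zero fun c _ => ?_
  by_cases hc : c ∈ A
  · simp [hw c (Finset.disjoint_left.mp h hc)]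
  · simp [hu c hc]

/-- The coordinates of `H • w`, rounded down. -/
noncomputable def gridFloor (H : ℕ) (w : EuclideanSpace ℝ ι) (c : ι) : ℤ := ⌊H * w c⌋

/-- The vector `w` with its coordinates rounded down to multiples of `1 / H`, so that it is
described by finitely many integers. -/
noncomputable def gridRound (H : ℕ) (w : EuclideanSpace ℝ ι) : EuclideanSpace ℝ ι :=
  WithLp.toLp 2 fun c => (gridFloor H w c : ℝ) / H

theorem abs_gridFloor_le (H : ℕ) {w : EuclideanSpace ℝ ι} (hw : ‖w‖ ≤ 1) (c : ι) :
    |gridFloor H w c| ≤ H := by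
  have hc := abs_le.mp ((PiLp.norm_apply_le w c).trans hw)
  have : (0 : ℝ) ≤ H := Nat.cast_nonneg H
  refine abs_le.mpr ⟨Int.le_floor.mpr ?_, Int.floor_le_iff.mpr ?_⟩ <;> push_cast <;> nlinarith

theorem norm_gridRound_sub_le {H : ℕ} (hH : 0 < H) (w : EuclideanSpace ℝ ι) :
    ‖gridRound H w - w‖ ≤ √(Fintype.card ι) / H := by
  have hH' : (0 : ℝ) < H := Nat.cast_pos.mpr hH
  rw [div_eq_mul_one_div]
  refine euclideanNorm_le_sqrt_card_mul (by positivity) fun c => ?_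
  have hcoord : (gridRound H w - w) c = -(Int.fract (H * w c) / H) := by
    simp only [gridRound, gridFloor, PiLp.sub_apply, Int.fract]
    field_simp
    ring
  rw [hcoord, abs_neg, abs_of_nonneg (div_nonneg (Int.fract_nonneg _) hH'.le)]
  gcongr
  exact (Int.fract_lt_one _).le

end Geometry

/-! ### The hard instances -/

section HardInstances

variable {d n : ℕ}

/-- The head of a row: the integer vector `z`, divided by `B`, with the coordinates in the range of
`f` set to zero. -/
noncomputable def headVec (f : Fin n ↪ Fin d) (B : ℕ) (z : Fin d → ℤ) : EuclideanSpace ℝ (Fin d) :=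
  open scoped Classical in WithLp.toLp 2 fun c => if c ∈ Set.range f then 0 else (z c : ℝ) / B

/-- The slab normal encoding the `i`-th row of the integer matrix `b`. The `f i`-th coordinate is
reserved for a large entry which keeps the slabs feasible for every `b`. -/
noncomputable def row (f : Fin n ↪ Fin d) (B : ℕ) (b : Matrix (Fin n) (Fin d) ℤ) (i : Fin n) :
    EuclideanSpace ℝ (Fin d) :=
  headVec f B (b i) + (d : ℝ) • EuclideanSpace.single (f i) 1

variable {f : Fin n ↪ Fin d} {B : ℕ} {b : Matrix (Fin n) (Fin d) ℤ}

theorem norm_headVec_le {z : Fin d → ℤ} (hz : ∀ c, |z c| ≤ B) : ‖headVec f B z‖ ≤ √d := by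
  have hcoord : ∀ c, |headVec f B z c| ≤ 1 := by
    intro c
    simp only [headVec]
    split_ifs
    · simp
    · rw [abs_div, Nat.abs_cast]
      exact div_le_one_of_le₀ (by exact_mod_cast hz c) (Nat.cast_nonneg B)
  simpa using euclideanNorm_le_sqrt_card_mul zero_le_one hcoord

theorem inner_headVec_single (z : Fin d → ℤ) (i : Fin n) :
    ⟪headVec f B z, EuclideanSpace.single (f i) 1⟫ = 0 := by
  simp [headVec, EuclideanSpace.inner_single_right]

theorem norm_row_le (hb : ∀ i c, |b i c| ≤ B) (i : Fin n) : ‖row f B b i‖ ≤ 2 * d := by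
  have hsqrt : √(d : ℝ) ≤ d :=
    Real.sqrt_le_iff.mpr ⟨by positivity, by exact_mod_cast Nat.le_self_pow two_ne_zero d⟩
  calc ‖row f B b i‖ ≤ ‖headVec f B (b i)‖ + ‖(d : ℝ) • EuclideanSpace.single (f i) (1 : ℝ)‖ :=
        norm_add_le _ _
    _ ≤ √d + d := by
        refine add_le_add (norm_headVec_le (hb i)) ?_
        rw [norm_smul, PiLp.norm_single]
        simp
    _ ≤ 2 * d := by linarith

theorem row_sub_row (b b' : Matrix (Fin n) (Fin d) ℤ) (i : Fin n) :
    row f B b i - row f B b' i = headVec f B (b i - b' i) := by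
  rw [row, row, add_sub_add_right_eq_sub]
  ext c
  simp only [headVec, PiLp.sub_apply, Pi.sub_apply]
  split_ifs
  · exact sub_zero 0
  · push_cast
    ring

theorem headVec_vecMul_gridFloor {κ : Type*} [Fintype κ] {v : κ → EuclideanSpace ℝ (Fin d)}
    (hv : ∀ l i, v l (f i) = 0) (H q : ℕ) (Δ : κ → ℤ) :
    headVec f (H * q) (Matrix.vecMul Δ (Matrix.of fun l => gridFloor H (v l))) =
      (q : ℝ)⁻¹ • ∑ l, (Δ l : ℝ) • gridRound H (v l) := by
  ext c
  simp only [headVec, PiLp.smul_apply, WithLp.ofLp_sum, Finset.sum_apply, gridRound, smul_eq_mul]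
  split_ifs with hc
  · obtain ⟨i, rfl⟩ := hc
    simp [gridFloor, hv]
  · simp only [Matrix.vecMul, dotProduct, Matrix.of_apply, Int.cast_sum, Int.cast_mul,
      Finset.sum_div, Finset.mul_sum, Nat.cast_mul]
    refine Finset.sum_congr rfl fun l _ => ?_
    ring

/-- Half-width of the slabs. -/
noncomputable def rowTol (d : ℕ) : ℝ := 1 / (24 * d * √d)

/-- Depth of the halfspaces. -/
noncomputable def cutDepth (d : ℕ) : ℝ := 1 / (8 * √d)

/-- Error committed by rounding a unit vector to the grid of mesh `1 / (8 * d ^ 2)`. -/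
noncomputable def gridTol (d : ℕ) : ℝ := 1 / (8 * d * √d)

/-- The hard instance with slab normals `a` and halfspace normals `w`, the latter rounded so that
they can be described in few bits. -/
noncomputable def hardCuts (a : Fin n → EuclideanSpace ℝ (Fin d))
    (w : ℕ → EuclideanSpace ℝ (Fin d)) : ℕ → Cut (EuclideanSpace ℝ (Fin d)) :=
  cutSeq (rowTol d) (cutDepth d) a fun j => gridRound (8 * d ^ 2) (w j)

theorem cutDepth_pos (hd : 0 < d) : 0 < cutDepth d := by
  unfold cutDepth
  positivity

theorem gridTol_eq (d : ℕ) : gridTol d = cutDepth d / d := by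
  rw [gridTol, cutDepth, div_div]
  ring_nf

theorem rowTol_eq (d : ℕ) : rowTol d = cutDepth d / d / 3 := by
  rw [rowTol, cutDepth, div_div, div_div]
  ring_nf

theorem gridTol_le_half_cutDepth (hd : 2 ≤ d) : gridTol d ≤ cutDepth d / 2 := by
  rw [gridTol_eq]
  gcongr
  · exact (cutDepth_pos (by omega)).le
  · exact_mod_cast hd

theorem norm_gridRound_sub_le_gridTol (hd : 0 < d) (w : EuclideanSpace ℝ (Fin d)) :
    ‖gridRound (8 * d ^ 2) w - w‖ ≤ gridTol d := by
  refine (norm_gridRound_sub_le (by positivity) w).trans_eq ?_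
  have hd' : (0 : ℝ) < d := Nat.cast_pos.mpr hd
  have hsq : √(d : ℝ) ^ 2 = d := Real.sq_sqrt hd'.le
  rw [Fintype.card_fin, gridTol]
  push_cast
  field_simp
  linarith

theorem abs_inner_gridRound_sub_le (hd : 0 < d) (w : EuclideanSpace ℝ (Fin d))
    {x : EuclideanSpace ℝ (Fin d)} (hx : ‖x‖ ≤ 1) :
    |⟪gridRound (8 * d ^ 2) w, x⟫ - ⟪w, x⟫| ≤ gridTol d := by
  rw [← inner_sub_left]
  have h := norm_gridRound_sub_le_gridTol hd w
  calc |⟪gridRound (8 * d ^ 2) w - w, x⟫| ≤ ‖gridRound (8 * d ^ 2) w - w‖ * ‖x‖ :=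
        abs_real_inner_le_norm _ _
    _ ≤ gridTol d * 1 := mul_le_mul h hx (norm_nonneg _) ((norm_nonneg _).trans h)
    _ = gridTol d := mul_one _

theorem sum_sq_inner_headVec_div_le (hd : 0 < d) (hb : ∀ i c, |b i c| ≤ B)
    (u : EuclideanSpace ℝ (Fin d)) : ∑ i, (⟪headVec f B (b i), u⟫ / d) ^ 2 ≤ ‖u‖ ^ 2 := by
  have hd' : (0 : ℝ) < d := Nat.cast_pos.mpr hd
  have hterm : ∀ i, (⟪headVec f B (b i), u⟫ / d) ^ 2 ≤ ‖u‖ ^ 2 / d := by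
    intro i
    have hinner : ⟪headVec f B (b i), u⟫ ^ 2 ≤ d * ‖u‖ ^ 2 := by
      calc ⟪headVec f B (b i), u⟫ ^ 2 ≤ (‖headVec f B (b i)‖ * ‖u‖) ^ 2 :=
            sq_le_sq.mpr ((abs_real_inner_le_norm _ _).trans (le_abs_self _))
        _ = ‖headVec f B (b i)‖ ^ 2 * ‖u‖ ^ 2 := mul_pow _ _ _
        _ ≤ √d ^ 2 * ‖u‖ ^ 2 := by gcongr; exact norm_headVec_le (hb i)
        _ = d * ‖u‖ ^ 2 := by rw [Real.sq_sqrt hd'.le]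
    rw [div_pow, div_le_div_iff₀ (by positivity) hd']
    nlinarith
  have hn : (n : ℝ) ≤ d := by exact_mod_cast by simpa using Fintype.card_le_of_embedding f
  calc ∑ i, (⟪headVec f B (b i), u⟫ / d) ^ 2 ≤ ∑ _i : Fin n, ‖u‖ ^ 2 / d :=
        Finset.sum_le_sum fun i _ => hterm i
    _ = n / d * ‖u‖ ^ 2 := by simp; ring
    _ ≤ 1 * ‖u‖ ^ 2 := by gcongr; exact div_le_one_of_le₀ hn hd'.le
    _ = ‖u‖ ^ 2 := one_mul _

-- Moving a deep point of the halfspaces along the reserved coordinates puts it on every hyperplane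
-- `⟪row f B b i, x⟫ = 0`.
theorem exists_center (hd : 0 < d) (hb : ∀ i c, |b i c| ≤ B) {N : ℕ} (hN : N ≤ d)
    {w : ℕ → EuclideanSpace ℝ (Fin d)} (hw : Orthonormal ℝ fun j : Fin N => w j)
    (hwf : ∀ j < N, ∀ i, w j (f i) = 0) :
    ∃ x, ‖x‖ ≤ 1 / 2 ∧ (∀ i, ⟪row f B b i, x⟫ = 0) ∧
      ∀ j < N, ⟪w j, x⟫ = -(2 * cutDepth d) := by
  have hd' : (0 : ℝ) < d := Nat.cast_pos.mpr hd
  set u : EuclideanSpace ℝ (Fin d) := ∑ j : Fin N, (-(2 * cutDepth d)) • w j with hu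
  have hwe : ∀ j < N, ∀ i, ⟪w j, EuclideanSpace.single (f i) (1 : ℝ)⟫ = 0 := fun j hj i => by
    simpa [EuclideanSpace.inner_single_right] using hwf j hj i
  have hue : ∀ i, ⟪EuclideanSpace.single (f i) (1 : ℝ), u⟫ = 0 := fun i => by
    rw [hu, inner_sum]
    refine Finset.sum_eq_zero fun j _ => ?_
    rw [real_inner_smul_right, real_inner_comm, hwe j j.isLt, mul_zero]
  have hu_norm : ‖u‖ ^ 2 ≤ 1 / 16 := by
    have hN' : (N : ℝ) ≤ d := by exact_mod_cast hN
    have hsq : √(d : ℝ) ^ 2 = d := Real.sq_sqrt hd'.le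
    rw [← real_inner_self_eq_norm_sq, hu, hw.inner_sum]
    simp only [map_neg, conj_trivial, neg_mul_neg, Finset.sum_const, Finset.card_univ,
      Fintype.card_fin, nsmul_eq_mul, cutDepth]
    field_simp
    linarith
  have he : Orthonormal ℝ fun i => EuclideanSpace.single (f i) (1 : ℝ) :=
    (EuclideanSpace.orthonormal_single (𝕜 := ℝ) (ι := Fin d)).comp f f.injective
  obtain ⟨x, hrow, hperp, hnorm⟩ := exists_orthonormal_correction he
    (g := fun i => headVec f B (b i)) (fun i j => inner_headVec_single (b i) j) hd'.ne' hue
  refine ⟨x, ?_, hrow, fun j hj => ?_⟩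
  · nlinarith [norm_nonneg x, sum_sq_inner_headVec_div_le (f := f) hd hb u]
  · rw [hperp _ (hwe j hj), hu]
    exact hw.inner_right_fintype _ ⟨j, hj⟩

theorem exists_closedBall_subset_region_hardCuts (hd : 2 ≤ d) (hb : ∀ i c, |b i c| ≤ B) {N : ℕ}
    (hN : N ≤ d) {w : ℕ → EuclideanSpace ℝ (Fin d)} (hw : Orthonormal ℝ fun j : Fin N => w j)
    (hwf : ∀ j < N, ∀ i, w j (f i) = 0) :
    ∃ x ∈ Metric.closedBall (0 : EuclideanSpace ℝ (Fin d)) 1,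
      Metric.closedBall x (1 / (48 * (d : ℝ) ^ 2 * √d)) ⊆
        region (hardCuts (row f B b) w) (n + N + 1) := by
  obtain ⟨x, hx, hrow, hdeep⟩ := exists_center (by omega) hb hN hw hwf
  have hd' : (2 : ℝ) ≤ d := by exact_mod_cast hd
  have hσ_le : cutDepth d ≤ 1 / 8 :=
    one_div_le_one_div_of_le (by norm_num)
      (le_mul_of_one_le_right (by norm_num) (Real.one_le_sqrt.mpr (by linarith)))
  set ε : ℝ := 1 / (48 * (d : ℝ) ^ 2 * √d) with hε
  have hε_le : ε ≤ cutDepth d / 6 := by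
    rw [hε, cutDepth, div_div]
    have hsq : (1 : ℝ) ≤ d ^ 2 := one_le_pow₀ (by linarith)
    gcongr 1 / ?_
    nlinarith [Real.sqrt_nonneg d]
  refine ⟨x, mem_closedBall_zero_iff.mpr (by linarith), fun y hy => ?_⟩
  have hyx : ‖y - x‖ ≤ ε := mem_closedBall_iff_norm.mp hy
  have hy1 : ‖y‖ ≤ 1 := by linarith [norm_le_norm_add_norm_sub' y x]
  refine mem_region_cutSeq.mpr ⟨hy1, fun i => ?_, fun j hj => ?_⟩
  · calc |⟪row f B b i, y⟫| = |⟪row f B b i, y - x⟫| := by rw [inner_sub_right, hrow, sub_zero]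
      _ ≤ ‖row f B b i‖ * ‖y - x‖ := abs_real_inner_le_norm _ _
      _ ≤ 2 * d * ε := by gcongr; exact norm_row_le hb i
      _ = rowTol d := by rw [hε, rowTol]; field_simp; norm_num
  · have hround := abs_le.mp (abs_inner_gridRound_sub_le (by omega) (w j) hy1)
    have hmove : ⟪w j, y - x⟫ ≤ ε :=
      calc ⟪w j, y - x⟫ ≤ ‖w j‖ * ‖y - x‖ := real_inner_le_norm _ _
        _ ≤ 1 * ε := by rw [hw.1 ⟨j, hj⟩]; gcongr
        _ = ε := one_mul ε
    rw [inner_sub_right, hdeep j hj] at hmove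
    linarith [gridTol_le_half_cutDepth hd, cutDepth_pos (show 0 < d by omega)]

end HardInstances

/-! ### The resisting adversary -/

section Adversary

theorem exists_forall_of_update {α : Type*} [Nonempty α] {P : ℕ → (ℕ → α) → Prop}
    (hcongr : ∀ j w w', (∀ i ≤ j, w i = w' i) → P j w → P j w')
    (hex : ∀ j w, ∃ u, P j (Function.update w j u)) : ∃ w, ∀ j, P j w := by
  choose g hg using hex
  let W : ℕ → ℕ → α :=
    Nat.rec (fun _ => Classical.arbitrary α) fun j w => Function.update w j (g j w)
  have hW : ∀ m, ∀ i < m, W m i = W (i + 1) i := by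
    intro m
    induction m with
    | zero => exact fun i hi => absurd hi i.not_lt_zero
    | succ m ih =>
      intro i hi
      rcases Nat.lt_succ_iff_lt_or_eq.mp hi with hlt | rfl
      · exact (Function.update_of_ne hlt.ne _ _).trans (ih i hlt)
      · rfl
  exact ⟨fun i => W (i + 1) i, fun j =>
    hcongr j (W (j + 1)) _ (fun i hi => hW (j + 1) i (by omega)) (hg j (W j))⟩

variable {d n : ℕ}

/-- The `q`-th block of `2 * k` consecutive coordinates. -/
def block (d k q : ℕ) : Finset (Fin d) := {c | 2 * k * q ≤ c ∧ c < 2 * k * (q + 1)}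

theorem mem_block {k q : ℕ} {c : Fin d} :
    c ∈ block d k q ↔ 2 * k * q ≤ c ∧ c < 2 * k * (q + 1) :=
  Finset.mem_filter_univ c

theorem disjoint_block {k q q' : ℕ} (h : q ≠ q') : Disjoint (block d k q) (block d k q') := by
  wlog hlt : q < q' generalizing q q'
  · exact (this h.symm (h.lt_or_gt.resolve_left hlt)).symm
  rw [Finset.disjoint_left]
  intro c hc hc'
  have hle : 2 * k * (q + 1) ≤ 2 * k * q' := Nat.mul_le_mul_left _ hlt
  exact (((mem_block.mp hc).2.trans_le hle).trans_le (mem_block.mp hc').1).false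

theorem block_map_valEmbedding_subset (d k q : ℕ) :
    (block d k q).map Fin.valEmbedding ⊆ Finset.Ico (2 * k * q) (2 * k * (q + 1)) := by
  intro m hm
  obtain ⟨c, hc, rfl⟩ := Finset.mem_map.mp hm
  exact Finset.mem_Ico.mpr (mem_block.mp hc)

theorem card_block_le (d k q : ℕ) : (block d k q).card ≤ 2 * k := by
  have h := Finset.card_le_card (block_map_valEmbedding_subset d k q)
  rwa [Finset.card_map, Nat.card_Ico, mul_add_one, Nat.add_sub_cancel_left] at h

theorem card_block {k q : ℕ} (hq : 2 * k * (q + 1) ≤ d) : (block d k q).card = 2 * k := by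
  have hmap : (block d k q).map Fin.valEmbedding = Finset.Ico (2 * k * q) (2 * k * (q + 1)) := by
    refine (block_map_valEmbedding_subset d k q).antisymm fun c hc => ?_
    obtain ⟨hlo, hhi⟩ := Finset.mem_Ico.mp hc
    exact Finset.mem_map.mpr ⟨⟨c, hhi.trans_le hq⟩, mem_block.mpr ⟨hlo, hhi⟩, rfl⟩
  rw [← Finset.card_map, hmap, Nat.card_Ico, mul_add_one, Nat.add_sub_cancel_left]

theorem blockEnd_le {k P j : ℕ} (hj : j < P * k) : 2 * k * (j / k + 1) ≤ 2 * (P * k) := by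
  rw [mul_comm P, ← mul_assoc]
  exact Nat.mul_le_mul_left _ (Nat.div_lt_of_lt_mul (by rwa [mul_comm k]))

variable {M : ℕ}
  (alg : MemAlg M (EuclideanSpace ℝ (Fin d)) (Option (EuclideanSpace ℝ (Fin d))))
  (a : Fin n → EuclideanSpace ℝ (Fin d)) (w : ℕ → EuclideanSpace ℝ (Fin d))

/-- The cuts of level `j`: the ball, all slabs, and the first `j` halfspaces. `levelTime` is the
first time at which the algorithm satisfies all of them. -/
noncomputable def levelTime (j : ℕ) : ℕ := hitTime alg (hardCuts a w) (n + j + 1)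

/-- The query issued at time `levelTime alg a w j`. -/
noncomputable def levelPoint (j : ℕ) : EuclideanSpace ℝ (Fin d) :=
  hitPoint alg (hardCuts a w) (n + j + 1)

variable {w} in
theorem hardCuts_congr {w' : ℕ → EuclideanSpace ℝ (Fin d)} {j r : ℕ} (h : ∀ i < j, w i = w' i)
    (hr : r < n + j + 1) : hardCuts a w r = hardCuts a w' r :=
  cutSeq_congr (fun _ _ => rfl) (fun i hi => by rw [h i hi]) hr

variable {w} in
theorem levelPoint_congr {w' : ℕ → EuclideanSpace ℝ (Fin d)} {j : ℕ} (h : ∀ i < j, w i = w' i) :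
    levelPoint alg a w j = levelPoint alg a w' j :=
  hitPoint_congr alg fun _ hr => hardCuts_congr a h hr

/-- The requirements on the `j`-th halfspace normal of an adversary resisting `alg`. The normals
come in groups of `k` sharing a block of coordinates; each is orthogonal to its predecessors and to
the points at which the algorithm satisfied the earlier levels of its group, so that none of these
points is deep enough in the new halfspace. -/
structure ResistsAt (k j : ℕ) : Prop where
  norm_eq_one : ‖w j‖ = 1
  apply_eq_zero : ∀ c ∉ block d k (j / k), w j c = 0
  inner_eq_zero : ∀ i < j, i / k = j / k → ⟪w i, w j⟫ = 0
  inner_levelPoint : ∀ i ≤ j, i / k = j / k → ⟪levelPoint alg a w i, w j⟫ = 0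

variable {alg a w}

theorem ResistsAt.congr {w' : ℕ → EuclideanSpace ℝ (Fin d)} {k j : ℕ}
    (hw : ResistsAt alg a w k j) (heq : ∀ i ≤ j, w i = w' i) : ResistsAt alg a w' k j where
  norm_eq_one := heq j le_rfl ▸ hw.norm_eq_one
  apply_eq_zero := heq j le_rfl ▸ hw.apply_eq_zero
  inner_eq_zero i hi hik := by
    rw [← heq i hi.le, ← heq j le_rfl]
    exact hw.inner_eq_zero i hi hik
  inner_levelPoint i hi hik := by
    rw [← levelPoint_congr alg a fun l hl => heq l (hl.le.trans hi), ← heq j le_rfl]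
    exact hw.inner_levelPoint i hi hik

theorem ResistsAt.apply_eq_zero_of_le {k P j : ℕ} (hw : ResistsAt alg a w k j) (hj : j < P * k)
    {c : Fin d} (hc : 2 * (P * k) ≤ c) : w j c = 0 :=
  hw.apply_eq_zero c fun hmem => hc.not_gt ((mem_block.mp hmem).2.trans_le (blockEnd_le hj))

variable (alg a w)

theorem exists_resistsAt_update {k j : ℕ} (hk : 0 < k) (hd : 2 * k * (j / k + 1) ≤ d) :
    ∃ u, ResistsAt alg a (Function.update w j u) k j := by
  classical
  let S := (Finset.Ico (k * (j / k)) j).image w ∪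
    (Finset.Icc (k * (j / k)) j).image (levelPoint alg a w)
  have hS : S.card < (block d k (j / k)).card := by
    have h₁ : S.card ≤ (j - k * (j / k)) + (j + 1 - k * (j / k)) := by
      refine (Finset.card_union_le _ _).trans (add_le_add ?_ ?_)
      · exact Finset.card_image_le.trans_eq (Nat.card_Ico _ _)
      · exact Finset.card_image_le.trans_eq (Nat.card_Icc _ _)
    have h₂ := Nat.div_add_mod j k
    have h₃ := Nat.mod_lt j hk
    rw [card_block hd]
    omega
  obtain ⟨u, hu, hblock, horth⟩ := exists_norm_eq_one_inner_eq_zero_supported _ S hS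
  have hgroup : ∀ i, i / k = j / k → k * (j / k) ≤ i := fun i hi => hi ▸ Nat.mul_div_le i k
  refine ⟨u, by rwa [Function.update_self], by rwa [Function.update_self], fun i hi hik => ?_,
    fun i hi hik => ?_⟩
  · rw [Function.update_self, Function.update_of_ne hi.ne]
    exact horth _ (Finset.mem_union_left _
      (Finset.mem_image_of_mem _ (Finset.mem_Ico.mpr ⟨hgroup i hik, hi⟩)))
  · rw [Function.update_self, levelPoint_congr alg a fun l hl =>
      Function.update_of_ne (hl.trans_le hi).ne u w]
    exact horth _ (Finset.mem_union_right _
      (Finset.mem_image_of_mem _ (Finset.mem_Icc.mpr ⟨hgroup i hik, hi⟩)))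

theorem exists_forall_resistsAt {k P : ℕ} (hk : 0 < k) (hd : 2 * (P * k) ≤ d) :
    ∃ w, ∀ j < P * k, ResistsAt alg a w k j := by
  obtain ⟨w, hw⟩ := exists_forall_of_update
    (P := fun j w => 2 * k * (j / k + 1) ≤ d → ResistsAt alg a w k j)
    (fun j w w' heq hw hj => (hw hj).congr heq)
    (fun j w => by
      by_cases hj : 2 * k * (j / k + 1) ≤ d
      · exact (exists_resistsAt_update alg a w hk hj).imp fun _ hu _ => hu
      · exact ⟨0, fun h => absurd h hj⟩)
  exact ⟨w, fun j hj => hw j ((blockEnd_le hj).trans hd)⟩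

variable {alg a w}

theorem orthonormal_of_resistsAt {k N : ℕ} (hw : ∀ j < N, ResistsAt alg a w k j) :
    Orthonormal ℝ fun j : Fin N => w j := by
  have horth : ∀ i j : ℕ, i < j → j < N → ⟪w i, w j⟫ = 0 := fun i j hij hj => by
    by_cases hk : i / k = j / k
    · exact (hw j hj).inner_eq_zero i hij hk
    · exact inner_eq_zero_of_disjoint_support (disjoint_block hk)
        (hw i (hij.trans hj)).apply_eq_zero (hw j hj).apply_eq_zero
  refine ⟨fun j => (hw j j.isLt).norm_eq_one, fun i j hij => ?_⟩
  rcases lt_or_gt_of_ne (Fin.val_ne_of_ne hij) with h | h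
  · exact horth i j h j.isLt
  · exact (real_inner_comm _ _).trans (horth j i h i.isLt)

variable (alg a w) in
/-- The adversary resists for `N` levels and at time `τ` the algorithm queries a feasible point of
each of these levels. -/
structure IsResistingRun (k N τ : ℕ) : Prop where
  resistsAt : ∀ j < N, ResistsAt alg a w k j
  queryAt_mem : ∀ j ≤ N, alg.queryAt (cutOracle (hardCuts a w) (n + j + 1)) τ ∈
    region (hardCuts a w) (n + j + 1)

theorem exists_isResistingRun {T k P B : ℕ} (hd : 2 ≤ d) (hk : 0 < k) {f : Fin n ↪ Fin d}
    (hPd : 2 * (P * k) ≤ d) (hf : ∀ i, 2 * (P * k) ≤ f i) {b : Matrix (Fin n) (Fin d) ℤ}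
    (hb : ∀ i c, |b i c| ≤ B)
    (hsol : SolvesFeasibility d alg T (1 / (48 * (d : ℝ) ^ 2 * √d))) :
    ∃ w, IsResistingRun alg (row f B b) w k (P * k) (T - 1) := by
  obtain ⟨w, hw⟩ := exists_forall_resistsAt alg (row f B b) hk hPd
  refine ⟨w, hw, fun j hj => ?_⟩
  have hwf : ∀ j < P * k, ∀ i, w j (f i) = 0 := fun j hj i =>
    (hw j hj).apply_eq_zero_of_le hj (hf i)
  obtain ⟨x, hx, hball⟩ := exists_closedBall_subset_region_hardCuts hd hb (by omega)
    (orthonormal_of_resistsAt hw) hwf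
  exact hsol _ (convex_region _ _) region_cutSeq_subset_closedBall
    ⟨x, hx, hball.trans (region_antitone _ (by omega))⟩ _ (isSeparationOracle_cutOracle _ _)

namespace IsResistingRun

variable {k N τ : ℕ}

theorem levelTime_le (hw : IsResistingRun alg a w k N τ) {j : ℕ} (hj : j ≤ N) :
    levelTime alg a w j ≤ τ :=
  hitTime_le (hw.queryAt_mem j hj)

theorem levelPoint_mem (hw : IsResistingRun alg a w k N τ) {j : ℕ} (hj : j ≤ N) :
    levelPoint alg a w j ∈ region (hardCuts a w) (n + j + 1) :=
  hitPoint_mem (hw.queryAt_mem j hj)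

theorem norm_levelPoint_le (hw : IsResistingRun alg a w k N τ) {j : ℕ} (hj : j ≤ N) :
    ‖levelPoint alg a w j‖ ≤ 1 :=
  (mem_region_cutSeq.mp (hw.levelPoint_mem hj)).1

theorem abs_inner_levelPoint_le (hw : IsResistingRun alg a w k N τ) {j : ℕ} (hj : j ≤ N)
    (i : Fin n) : |⟪a i, levelPoint alg a w j⟫| ≤ rowTol d :=
  (mem_region_cutSeq.mp (hw.levelPoint_mem hj)).2.1 i

theorem inner_gridRound_levelPoint_le (hw : IsResistingRun alg a w k N τ) {i j : ℕ} (hij : i < j)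
    (hj : j ≤ N) : ⟪gridRound (8 * d ^ 2) (w i), levelPoint alg a w j⟫ ≤ -cutDepth d :=
  (mem_region_cutSeq.mp (hw.levelPoint_mem hj)).2.2 i hij

theorem abs_inner_gridRound_levelPoint_le (hw : IsResistingRun alg a w k N τ) (hd : 0 < d)
    {i j : ℕ} (hij : i ≤ j) (hj : j < N) (hk : i / k = j / k) :
    |⟪gridRound (8 * d ^ 2) (w j), levelPoint alg a w i⟫| ≤ gridTol d := by
  have h := abs_inner_gridRound_sub_le hd (w j) (hw.norm_levelPoint_le (hij.trans hj.le))
  have horth := (hw.resistsAt j hj).inner_levelPoint i hij hk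
  rw [real_inner_comm] at horth
  rwa [horth, sub_zero] at h

theorem levelTime_lt (hw : IsResistingRun alg a w k N τ) (hd : 2 ≤ d) {j : ℕ} (hj : j < N) :
    levelTime alg a w j < levelTime alg a w (j + 1) := by
  refine hitTime_lt_of_hitPoint_notMem (by omega) (hw.levelPoint_mem hj) fun hmem => ?_
  have hdeep := (mem_region_cutSeq.mp hmem).2.2 j j.lt_succ_self
  have hshallow := (abs_le.mp
    (hw.abs_inner_gridRound_levelPoint_le (by omega) le_rfl hj rfl)).1
  rw [levelPoint] at hshallow
  linarith [gridTol_le_half_cutDepth hd, cutDepth_pos (show 0 < d by omega)]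

theorem levelTime_mono (hw : IsResistingRun alg a w k N τ) (hd : 2 ≤ d) {i j : ℕ} (hij : i ≤ j)
    (hj : j ≤ N) : levelTime alg a w i ≤ levelTime alg a w j := by
  induction j, hij using Nat.le_induction with
  | base => exact le_rfl
  | succ j _ ih => exact (ih (by omega)).trans (hw.levelTime_lt hd hj).le

theorem le_levelTime (hw : IsResistingRun alg a w k N τ) (hd : 2 ≤ d) {j : ℕ} (hj : j ≤ N) :
    j ≤ levelTime alg a w j := by
  induction j with
  | zero => exact Nat.zero_le _
  | succ j ih => exact (ih (by omega)).trans_lt (hw.levelTime_lt hd hj)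

end IsResistingRun

end Adversary

/-! ### Integer matrices -/

section IntegerMatrices

theorem eq_zero_of_abs_mulVec_le {ι : Type*} [Fintype ι] [LinearOrder ι] {G : Matrix ι ι ℝ}
    {Δ : ι → ℤ} {σ τ S θ : ℝ} (hτ : 0 ≤ τ) (hS : 0 ≤ S) (hdiag : ∀ l, σ ≤ |G l l|)
    (hupper : ∀ l l', l < l' → |G l l'| ≤ τ) (hΔ : ∀ l, |(Δ l : ℝ)| ≤ S)
    (hG : ∀ l, |∑ l', G l l' * Δ l'| ≤ θ) (hσ : θ + Fintype.card ι * (τ * S) < σ) : Δ = 0 := by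
  funext l
  induction l using WellFoundedLT.induction with
  | ind l ih =>
  by_contra hl
  have hone : (1 : ℝ) ≤ |(Δ l : ℝ)| := by exact_mod_cast Int.one_le_abs hl
  have hrest : |∑ l' ∈ Finset.univ.erase l, G l l' * Δ l'| ≤ Fintype.card ι * (τ * S) := by
    refine (Finset.abs_sum_le_sum_abs _ _).trans
      ((Finset.sum_le_card_nsmul _ _ (τ * S) ?_).trans ?_)
    · intro l' hl'
      rcases lt_or_gt_of_ne (Finset.ne_of_mem_erase hl') with hlt | hgt
      · rw [ih l' hlt]
        simpa using mul_nonneg hτ hS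
      · rw [abs_mul]
        exact mul_le_mul (hupper l l' hgt) (hΔ l') (abs_nonneg _) hτ
    · rw [nsmul_eq_mul]
      gcongr
      exact Finset.card_le_univ _
  have hsplit := Finset.add_sum_erase Finset.univ (fun l' => G l l' * Δ l') (Finset.mem_univ l)
  have hpivot : |G l l * Δ l| ≤ θ + Fintype.card ι * (τ * S) := by
    rw [eq_sub_of_add_eq hsplit]
    exact (abs_sub _ _).trans (add_le_add (hG l) hrest)
  rw [abs_mul] at hpivot
  nlinarith [hdiag l, abs_nonneg (G l l)]

variable {ι κ γ α : Type*} [Fintype ι] [Fintype κ] [Fintype γ]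

/-- The finite set of matrices whose `(i, c)` entry lies in `s i c`. -/
def matrixBox [DecidableEq ι] [DecidableEq γ] (s : ι → γ → Finset α) : Finset (Matrix ι γ α) :=
  Fintype.piFinset fun i => Fintype.piFinset (s i)

theorem mem_matrixBox [DecidableEq ι] [DecidableEq γ] {s : ι → γ → Finset α} {A : Matrix ι γ α} :
    A ∈ matrixBox s ↔ ∀ i c, A i c ∈ s i c :=
  Fintype.mem_piFinset.trans (forall_congr' fun _ => Fintype.mem_piFinset)

theorem card_matrixBox [DecidableEq ι] [DecidableEq γ] (s : ι → γ → Finset α) :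
    (matrixBox s).card = ∏ i, ∏ c, (s i c).card :=
  (Fintype.card_piFinset _).trans (Finset.prod_congr rfl fun _ _ => Fintype.card_piFinset _)

/-- Coefficient matrices with entries in `[0, S)` and vanishing rows in `R`. -/
noncomputable def coeffBox (κ : Type*) [Fintype κ] [DecidableEq ι] [DecidableEq κ] (R : Finset ι)
    (S : ℕ) : Finset (Matrix ι κ ℤ) :=
  matrixBox fun i _ => if i ∈ R then {0} else Finset.Ico 0 (S : ℤ)

variable [DecidableEq ι] [DecidableEq κ] [DecidableEq γ]

theorem coeffBox_eq_zero {R : Finset ι} {S : ℕ} {D : Matrix ι κ ℤ} (hD : D ∈ coeffBox κ R S)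
    {i : ι} (hi : i ∈ R) : D i = 0 := by
  funext l
  simpa [hi] using mem_matrixBox.mp hD i l

theorem mem_Ico_of_mem_coeffBox {R : Finset ι} {S : ℕ} (hS : 0 < S) {D : Matrix ι κ ℤ}
    (hD : D ∈ coeffBox κ R S) (i : ι) (l : κ) : 0 ≤ D i l ∧ D i l < S := by
  have h := mem_matrixBox.mp hD i l
  split_ifs at h
  · rw [Finset.mem_singleton.mp h]
    omega
  · exact Finset.mem_Ico.mp h

theorem card_coeffBox (R : Finset ι) (S : ℕ) :
    (coeffBox κ R S).card = S ^ (Fintype.card κ * (Fintype.card ι - R.card)) := by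
  have hentry : ∀ i : ι, (if i ∈ R then {0} else Finset.Ico 0 (S : ℤ)).card =
      if i ∈ R then 1 else S := fun i => by split_ifs <;> simp
  simp only [coeffBox, card_matrixBox, hentry, Finset.prod_const, Finset.card_univ, apply_ite
    (· ^ Fintype.card κ), one_pow, Finset.prod_ite, one_mul, ← pow_mul]
  congr 2
  rw [← Finset.card_compl]
  congr 1
  ext i
  simp

/-- Matrices with entries in `[-B, 2 * B)` in the columns of `A` and in `[0, B)` elsewhere. -/
noncomputable def shearedBox (ι : Type*) [Fintype ι] [DecidableEq ι] (A : Finset γ) (B : ℕ) :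
    Finset (Matrix ι γ ℤ) :=
  matrixBox fun _ c => if c ∈ A then Finset.Ico (-B : ℤ) (2 * B) else Finset.Ico 0 (B : ℤ)

theorem card_shearedBox (A : Finset γ) (B : ℕ) :
    (shearedBox ι A B).card =
      3 ^ (A.card * Fintype.card ι) * B ^ (Fintype.card γ * Fintype.card ι) := by
  have hentry : ∀ c, (if c ∈ A then Finset.Ico (-B : ℤ) (2 * B) else Finset.Ico 0 (B : ℤ)).card =
      (if c ∈ A then 3 else 1) * B := fun c => by
    split_ifs
    · rw [Int.card_Ico]
      omega
    · simp
  simp only [shearedBox, card_matrixBox, hentry, Finset.prod_mul_distrib, Finset.prod_ite_mem,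
    Finset.univ_inter, Finset.prod_const, Finset.card_univ, ← pow_mul]

theorem add_mul_mem_shearedBox {b : Matrix ι γ ℤ} {D : Matrix ι κ ℤ} {F : Matrix κ γ ℤ}
    {A : Finset γ} {R : Finset ι} {B S H : ℕ} (hS : 0 < S) (hB : H * (Fintype.card κ * S) ≤ B)
    (hb : b ∈ matrixBox fun _ _ => Finset.Ico 0 (B : ℤ)) (hD : D ∈ coeffBox κ R S)
    (hF : ∀ l c, |F l c| ≤ H) (hFA : ∀ l, ∀ c ∉ A, F l c = 0) :
    b + D * F ∈ shearedBox ι A B := by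
  refine mem_matrixBox.mpr fun i c => ?_
  have hbic := Finset.mem_Ico.mp (mem_matrixBox.mp hb i c)
  rw [Matrix.add_apply, Matrix.mul_apply]
  split_ifs with hc
  · have hshear : |∑ l, D i l * F l c| ≤ B := by
      calc |∑ l, D i l * F l c| ≤ ∑ l, |D i l * F l c| := Finset.abs_sum_le_sum_abs _ _
        _ ≤ ∑ _l : κ, (S : ℤ) * H := Finset.sum_le_sum fun l _ => by
            obtain ⟨h₀, h₁⟩ := mem_Ico_of_mem_coeffBox hS hD i l
            rw [abs_mul, abs_of_nonneg h₀]
            exact mul_le_mul h₁.le (hF l c) (abs_nonneg _) (Nat.cast_nonneg S)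
        _ = (H * (Fintype.card κ * S) : ℕ) := by
            rw [Finset.sum_const, Finset.card_univ]
            push_cast
            ring
        _ ≤ B := by exact_mod_cast hB
    rw [Finset.mem_Ico]
    have := abs_le.mp hshear
    omega
  · simpa [hFA _ c hc] using hbic

-- If `b + D * F` determines `D`, then it determines `(b, D)`; compare the numbers of pairs and of
-- possible sums.
theorem card_mul_pow_le_of_shear {𝓕 : Finset (Matrix ι γ ℤ)} {F : Matrix κ γ ℤ} {A : Finset γ}
    {R : Finset ι} {B S H : ℕ} (hS : 0 < S) (hB : H * (Fintype.card κ * S) ≤ B)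
    (h𝓕 : ∀ b ∈ 𝓕, b ∈ matrixBox fun _ _ => Finset.Ico 0 (B : ℤ))
    (hF : ∀ l c, |F l c| ≤ H) (hFA : ∀ l, ∀ c ∉ A, F l c = 0)
    (hdet : ∀ b ∈ 𝓕, ∀ b' ∈ 𝓕, ∀ D ∈ coeffBox κ R S, ∀ D' ∈ coeffBox κ R S,
      b + D * F = b' + D' * F → D = D') :
    𝓕.card * S ^ (Fintype.card κ * (Fintype.card ι - R.card)) ≤
      3 ^ (A.card * Fintype.card ι) * B ^ (Fintype.card γ * Fintype.card ι) := by
  rw [← card_coeffBox, ← card_shearedBox, ← Finset.card_product]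
  refine Finset.card_le_card_of_injOn (fun bD => bD.1 + bD.2 * F) ?_ ?_
  · rintro ⟨b, D⟩ hbD
    obtain ⟨hb, hD⟩ := Finset.mem_product.mp hbD
    exact add_mul_mem_shearedBox hS hB (h𝓕 b hb) hD hF hFA
  · rintro ⟨b, D⟩ hbD ⟨b', D'⟩ hbD' heq
    obtain ⟨hb, hD⟩ := Finset.mem_product.mp hbD
    obtain ⟨hb', hD'⟩ := Finset.mem_product.mp hbD'
    obtain rfl := hdet b hb b' hb' D hD D' hD' heq
    exact Prod.ext (add_right_cancel heq) rfl

theorem card_mul_le_mul_card_of_mapsTo {α β : Type*} [DecidableEq β] {s : Finset α}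
    {t : Finset β} {g : α → β} (hg : ∀ x ∈ s, g x ∈ t) {q X : ℕ}
    (hfiber : ∀ y ∈ t, (s.filter (g · = y)).card * q ≤ X) : s.card * q ≤ X * t.card := by
  rw [Finset.card_eq_sum_card_fiberwise hg, Finset.sum_mul, mul_comm X]
  exact Finset.sum_le_card_nsmul _ _ _ hfiber

end IntegerMatrices

/-! ### Transcripts -/

section Transcripts

variable {d n M : ℕ}

/-- The rows whose slabs occur in a list of reported cut indices. -/
def revealedRows (n : ℕ) {h : ℕ} (π : Fin h → ℕ) : Finset (Fin n) := {i | ∃ s, π s = i + 1}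

theorem mem_revealedRows {h : ℕ} {π : Fin h → ℕ} {i : Fin n} :
    i ∈ revealedRows n π ↔ ∃ s, π s = i + 1 :=
  Finset.mem_filter_univ i

theorem card_revealedRows_le {h : ℕ} (π : Fin h → ℕ) : (revealedRows n π).card ≤ h := by
  have hsub : (revealedRows n π).image (fun i : Fin n => (i + 1 : ℕ)) ⊆ Finset.univ.image π := by
    intro m hm
    obtain ⟨i, hi, rfl⟩ := Finset.mem_image.mp hm
    obtain ⟨s, hs⟩ := mem_revealedRows.mp hi
    exact Finset.mem_image.mpr ⟨s, Finset.mem_univ s, hs⟩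
  have hinj : Function.Injective fun i : Fin n => (i + 1 : ℕ) := fun i i' h => by
    simpa [Fin.ext_iff] using h
  rw [← Finset.card_image_of_injective _ hinj]
  exact (Finset.card_le_card hsub).trans (Finset.card_image_le.trans_eq (Finset.card_fin h))

/-- What a decoder needs in order to replay a window of `h` iterations of a run. -/
structure Transcript (d M N k h : ℕ) where
  /-- the memory state at the beginning of the window -/
  memory : Fin M → Bool
  /-- the indices of the cuts reported in the window -/
  reports : Fin h → ℕ
  /-- the positions in the window at which the next `k` levels are satisfied -/
  delays : Fin k → ℕ
  /-- the rounded halfspace normals -/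
  grid : Matrix (Fin N) (Fin d) ℤ

/-- The rounded normals of the `k` halfspaces satisfied in a window beginning at level `m`. -/
def Transcript.windowGrid {N k h m : ℕ} (t : Transcript d M N k h) (hm : m + k ≤ N) :
    Matrix (Fin k) (Fin d) ℤ :=
  Matrix.of fun l => t.grid ⟨m + l, by omega⟩

variable (alg : MemAlg M (EuclideanSpace ℝ (Fin d)) (Option (EuclideanSpace ℝ (Fin d))))
  (a : Fin n → EuclideanSpace ℝ (Fin d)) (w : ℕ → EuclideanSpace ℝ (Fin d))

/-- The transcript of the window beginning at time `levelTime alg a w m`. -/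
noncomputable def transcript (N k h m : ℕ) : Transcript d M N k h where
  memory := alg.mem (cutOracle (hardCuts a w) (n + N + 1)) (levelTime alg a w m)
  reports s := reportedIndex alg (hardCuts a w) (n + N + 1) (levelTime alg a w m + s)
  delays l := levelTime alg a w (m + l + 1) - levelTime alg a w m
  grid := Matrix.of fun j => gridFloor (8 * d ^ 2) (w j)

variable {alg a w} {a' : Fin n → EuclideanSpace ℝ (Fin d)} {w' : ℕ → EuclideanSpace ℝ (Fin d)}
  {N k h τ m : ℕ}

theorem gridFloor_eq_of_transcript_eq
    (ht : transcript alg a w N k h m = transcript alg a' w' N k h m) {j : ℕ} (hj : j < N) :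
    gridFloor (8 * d ^ 2) (w j) = gridFloor (8 * d ^ 2) (w' j) :=
  congrFun (congrArg Transcript.grid ht) ⟨j, hj⟩

theorem gridRound_eq_of_transcript_eq
    (ht : transcript alg a w N k h m = transcript alg a' w' N k h m) {j : ℕ} (hj : j < N) :
    gridRound (8 * d ^ 2) (w j) = gridRound (8 * d ^ 2) (w' j) := by
  rw [gridRound, gridRound, gridFloor_eq_of_transcript_eq ht hj]

theorem hardCuts_reportedIndex_eq (ht : transcript alg a w N k h m = transcript alg a' w' N k h m)
    (ha : ∀ i ∈ revealedRows n (transcript alg a w N k h m).reports, a i = a' i) (s : Fin h)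
    (hs : (transcript alg a w N k h m).reports s < n + N + 1) :
    hardCuts a w ((transcript alg a w N k h m).reports s) =
      hardCuts a' w' ((transcript alg a w N k h m).reports s) :=
  cutSeq_congr (fun i hi => ha i (mem_revealedRows.mpr ⟨s, hi⟩))
    (fun _ hj => gridRound_eq_of_transcript_eq ht hj) hs

theorem IsResistingRun.levelTime_eq_add_delay (hw : IsResistingRun alg a w k N τ) (hd : 2 ≤ d)
    (hm : m + k ≤ N) (h : ℕ) (l : Fin k) :
    levelTime alg a w (m + l + 1) =
      levelTime alg a w m + (transcript alg a w N k h m).delays l :=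
  (Nat.add_sub_cancel' (hw.levelTime_mono hd (by omega) (by omega))).symm

theorem IsResistingRun.delays_lt (hw : IsResistingRun alg a w k N τ) (hd : 2 ≤ d) (hm : m + k ≤ N)
    (hgap : levelTime alg a w (m + k) < levelTime alg a w m + h) (l : Fin k) :
    (transcript alg a w N k h m).delays l < h := by
  have hmono : levelTime alg a w (m + l + 1) ≤ levelTime alg a w (m + k) :=
    hw.levelTime_mono hd (by omega) hm
  have heq := hw.levelTime_eq_add_delay hd hm h l
  omega

theorem levelPoint_eq_of_transcript_eq (hd : 2 ≤ d) (hm : m + k ≤ N)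
    (hw : IsResistingRun alg a w k N τ) (hw' : IsResistingRun alg a' w' k N τ)
    (hgap : levelTime alg a w (m + k) < levelTime alg a w m + h)
    (ht : transcript alg a w N k h m = transcript alg a' w' N k h m)
    (ha : ∀ i ∈ revealedRows n (transcript alg a w N k h m).reports, a i = a' i) (l : Fin k) :
    levelPoint alg a w (m + l + 1) = levelPoint alg a' w' (m + l + 1) := by
  refine hitPoint_eq_of_reportedIndex_eq (J' := n + N + 1) (by omega)
    (hw.delays_lt hd hm hgap l).le (congrArg Transcript.memory ht)
    (fun s hs => congrFun (congrArg Transcript.reports ht) ⟨s, hs⟩)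
    (fun s hs => hardCuts_reportedIndex_eq ht ha ⟨s, hs⟩)
    (hw.levelTime_eq_add_delay hd hm h l) ?_
  rw [ht]
  exact hw'.levelTime_eq_add_delay hd hm h l

end Transcripts

/-! ### Counting transcripts -/

section Counting

variable {d n M : ℕ}

/-- The integer matrices which may encode `N` rounded halfspace normals, the `j`-th of them being
supported in block number `j / k`. -/
noncomputable def gridBox (d N k : ℕ) : Finset (Matrix (Fin N) (Fin d) ℤ) :=
  matrixBox fun j c =>
    if c ∈ block d k (j / k) then Finset.Icc (-(8 * d ^ 2 : ℕ) : ℤ) (8 * d ^ 2 : ℕ) else {0}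

theorem card_gridBox_le (d N k : ℕ) : (gridBox d N k).card ≤ (16 * d ^ 2 + 1) ^ (2 * k * N) := by
  have hentry : ∀ (j : ℕ) (c : Fin d), (if c ∈ block d k (j / k) then
      Finset.Icc (-(8 * d ^ 2 : ℕ) : ℤ) (8 * d ^ 2 : ℕ) else {0}).card =
        if c ∈ block d k (j / k) then 16 * d ^ 2 + 1 else 1 := fun j c => by
    split_ifs
    · rw [Int.card_Icc]
      omega
    · exact Finset.card_singleton 0
  have hrow : ∀ j : ℕ, ∏ c : Fin d, (if c ∈ block d k (j / k) then 16 * d ^ 2 + 1 else 1) ≤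
      (16 * d ^ 2 + 1) ^ (2 * k) := fun j => by
    rw [Finset.prod_ite_mem, Finset.univ_inter, Finset.prod_const]
    exact Nat.pow_le_pow_right (Nat.succ_pos _) (card_block_le d k _)
  simp only [gridBox, card_matrixBox, hentry]
  calc ∏ j : Fin N, ∏ c : Fin d, (if c ∈ block d k (j / k) then 16 * d ^ 2 + 1 else 1)
      ≤ ∏ _j : Fin N, (16 * d ^ 2 + 1) ^ (2 * k) :=
        Finset.prod_le_prod' fun j _ => hrow j
    _ = (16 * d ^ 2 + 1) ^ (2 * k * N) := by
        rw [Finset.prod_const, Finset.card_univ, Fintype.card_fin, ← pow_mul]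

open scoped Classical in
/-- The possible transcripts of windows of `h` iterations in which `k` levels are satisfied. -/
noncomputable def transcriptBox (d n M N k h : ℕ) : Finset (Transcript d M N k h) :=
  (Finset.univ ×ˢ (Fintype.piFinset fun _ => Finset.range (n + N + 2)) ×ˢ
    (Fintype.piFinset fun _ => Finset.range h) ×ˢ gridBox d N k).image
      fun t => ⟨t.1, t.2.1, t.2.2.1, t.2.2.2⟩

theorem card_transcriptBox_le (d n M N k h : ℕ) :
    (transcriptBox d n M N k h).card ≤
      2 ^ M * (n + N + 2) ^ h * h ^ k * (16 * d ^ 2 + 1) ^ (2 * k * N) := by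
  classical
  refine Finset.card_image_le.trans ?_
  simp only [Finset.card_product, Fintype.card_piFinset, Finset.card_range, Finset.prod_const,
    Finset.card_univ, Fintype.card_fun, Fintype.card_fin, Fintype.card_bool, ← mul_assoc]
  gcongr
  exact card_gridBox_le d N k

variable {alg : MemAlg M (EuclideanSpace ℝ (Fin d)) (Option (EuclideanSpace ℝ (Fin d)))}
  {N k h τ m : ℕ}

theorem IsResistingRun.abs_gridFloor_le {a : Fin n → EuclideanSpace ℝ (Fin d)}
    {w : ℕ → EuclideanSpace ℝ (Fin d)} (hw : IsResistingRun alg a w k N τ) {j : ℕ} (hj : j < N)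
    (H : ℕ) (c : Fin d) : |gridFloor H (w j) c| ≤ H :=
  _root_.abs_gridFloor_le H (hw.resistsAt j hj).norm_eq_one.le c

theorem IsResistingRun.gridFloor_eq_zero {a : Fin n → EuclideanSpace ℝ (Fin d)}
    {w : ℕ → EuclideanSpace ℝ (Fin d)} (hw : IsResistingRun alg a w k N τ) {j : ℕ} (hj : j < N)
    (H : ℕ) {c : Fin d} (hc : c ∉ block d k (j / k)) : gridFloor H (w j) c = 0 := by
  simp [gridFloor, (hw.resistsAt j hj).apply_eq_zero c hc]

theorem IsResistingRun.transcript_mem_transcriptBox {a : Fin n → EuclideanSpace ℝ (Fin d)}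
    {w : ℕ → EuclideanSpace ℝ (Fin d)} (hw : IsResistingRun alg a w k N τ) (hd : 2 ≤ d)
    (hm : m + k ≤ N) (hgap : levelTime alg a w (m + k) < levelTime alg a w m + h) :
    transcript alg a w N k h m ∈ transcriptBox d n M N k h := by
  classical
  refine Finset.mem_image.mpr ⟨⟨_, _, _, _⟩, ?_, rfl⟩
  refine Finset.mem_product.mpr ⟨Finset.mem_univ _, Finset.mem_product.mpr
    ⟨Fintype.mem_piFinset.mpr fun s => ?_, Finset.mem_product.mpr
      ⟨Fintype.mem_piFinset.mpr fun l => ?_, mem_matrixBox.mpr fun j c => ?_⟩⟩⟩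
  · exact Finset.mem_range.mpr (Nat.lt_succ_of_le firstViolated_le)
  · exact Finset.mem_range.mpr (hw.delays_lt hd hm hgap l)
  · split_ifs with hc
    · exact Finset.mem_Icc.mpr (abs_le.mp (hw.abs_gridFloor_le j.isLt _ c))
    · exact Finset.mem_singleton.mpr (hw.gridFloor_eq_zero j.isLt _ hc)

variable {f : Fin n ↪ Fin d}

theorem eq_of_row_shear_eq {κ : Type*} [Fintype κ] [LinearOrder κ] {H q S : ℕ}
    {b b' : Matrix (Fin n) (Fin d) ℤ} {D D' : Matrix (Fin n) κ ℤ}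
    {v x : κ → EuclideanSpace ℝ (Fin d)} {σ τ η : ℝ} (hq : 0 < q) (hτ : 0 ≤ τ)
    (hv : ∀ l i, v l (f i) = 0)
    (hD : b + D * Matrix.of (fun l => gridFloor H (v l)) =
      b' + D' * Matrix.of (fun l => gridFloor H (v l))) {i : Fin n}
    (hS : ∀ l, |D' i l - D i l| ≤ S) (hb : ∀ l, |⟪row f (H * q) b i, x l⟫| ≤ η)
    (hb' : ∀ l, |⟪row f (H * q) b' i, x l⟫| ≤ η) (hdiag : ∀ l, σ ≤ |⟪gridRound H (v l), x l⟫|)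
    (hupper : ∀ l l', l < l' → |⟪gridRound H (v l'), x l⟫| ≤ τ)
    (hσ : 2 * q * η + Fintype.card κ * (τ * S) < σ) : D i = D' i := by
  have hq' : (0 : ℝ) < q := Nat.cast_pos.mpr hq
  have hrow : row f (H * q) b i - row f (H * q) b' i =
      (q : ℝ)⁻¹ • ∑ l, ((D' i l - D i l : ℤ) : ℝ) • gridRound H (v l) := by
    have hdiff : b i - b' i =
        Matrix.vecMul (D' i - D i) (Matrix.of fun l => gridFloor H (v l)) := by
      rw [Matrix.sub_vecMul, sub_eq_sub_iff_add_eq_add]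
      exact (congrFun hD i).trans (add_comm _ _)
    rw [row_sub_row, hdiff, headVec_vecMul_gridFloor hv]
    rfl
  have hprobe : ∀ l, |∑ l', ⟪gridRound H (v l'), x l⟫ * (D' i l' - D i l' : ℤ)| ≤ 2 * q * η := by
    intro l
    have hsum : ∑ l', ⟪gridRound H (v l'), x l⟫ * (D' i l' - D i l' : ℤ) =
        q * (⟪row f (H * q) b i, x l⟫ - ⟪row f (H * q) b' i, x l⟫) := by
      rw [← inner_sub_left, hrow, real_inner_smul_left, mul_inv_cancel_left₀ hq'.ne', sum_inner]
      exact Finset.sum_congr rfl fun l' _ => by rw [real_inner_smul_left, mul_comm]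
    rw [hsum, abs_mul, Nat.abs_cast, mul_comm 2, mul_assoc]
    gcongr
    exact (abs_sub _ _).trans ((add_le_add (hb l) (hb' l)).trans_eq (two_mul η).symm)
  have hzero := eq_zero_of_abs_mulVec_le (G := Matrix.of fun l l' => ⟪gridRound H (v l'), x l⟫)
    (Δ := D' i - D i) hτ (Nat.cast_nonneg S) hdiag hupper
    (fun l => by exact_mod_cast hS l) hprobe hσ
  exact (sub_eq_zero.mp hzero).symm

theorem probe_error_lt_cutDepth {S : ℕ} (hS : 0 < S) (hk : 0 < k) (hkS : 2 * (k * S) ≤ d) :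
    2 * ((k * S : ℕ) : ℝ) * rowTol d + k * (gridTol d * S) < cutDepth d := by
  have hpos : (0 : ℝ) < (k * S : ℕ) := by exact_mod_cast Nat.mul_pos hk hS
  have hle : 2 * ((k * S : ℕ) : ℝ) ≤ d := by exact_mod_cast hkS
  have hd : (0 : ℝ) < d := by linarith
  have hσ := cutDepth_pos (Nat.cast_pos.mp hd)
  have hsum : 2 * ((k * S : ℕ) : ℝ) * rowTol d + k * (gridTol d * S) =
      5 / 3 * (k * S : ℕ) / d * cutDepth d := by
    rw [rowTol_eq, gridTol_eq]
    push_cast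
    ring
  rw [hsum]
  refine mul_lt_of_lt_one_left hσ ((div_lt_one hd).mpr ?_)
  linarith

theorem mul_add_div_eq (p : ℕ) (l : Fin k) : (p * k + l) / k = p := by
  rw [mul_comm, Nat.mul_add_div (Nat.zero_lt_of_lt l.isLt), Nat.div_eq_of_lt l.isLt, add_zero]

theorem row_eq_of_mem_revealedRows {κ : Type*} [Fintype κ] [DecidableEq κ] {S B : ℕ}
    {R : Finset (Fin n)} {b b' : Matrix (Fin n) (Fin d) ℤ} {D D' : Matrix (Fin n) κ ℤ}
    {F : Matrix κ (Fin d) ℤ} (hD : D ∈ coeffBox κ R S) (hD' : D' ∈ coeffBox κ R S)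
    (heq : b + D * F = b' + D' * F) {i : Fin n} (hi : i ∈ R) : row f B b i = row f B b' i := by
  have hrow : b i = b' i := by
    funext c
    simpa only [Matrix.add_apply, Matrix.mul_apply, coeffBox_eq_zero hD hi,
      coeffBox_eq_zero hD' hi, Pi.zero_apply, zero_mul, Finset.sum_const_zero, add_zero]
      using congrFun (congrFun heq i) c
  rw [row, row, hrow]

variable {P S p B : ℕ}

theorem eq_of_add_mul_windowGrid_eq {b b' : Matrix (Fin n) (Fin d) ℤ}
    {w w' : ℕ → EuclideanSpace ℝ (Fin d)} (hd : 2 ≤ d) (hk : 0 < k) (hS : 0 < S)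
    (hkS : 2 * (k * S) ≤ d) (hf : ∀ i, 2 * (P * k) ≤ f i) (hB : B = 8 * d ^ 2 * (k * S))
    (hm : p * k + k ≤ P * k) (hw : IsResistingRun alg (row f B b) w k (P * k) τ)
    (hw' : IsResistingRun alg (row f B b') w' k (P * k) τ)
    (hgap : levelTime alg (row f B b) w (p * k + k) < levelTime alg (row f B b) w (p * k) + h)
    {t : Transcript d M (P * k) k h}
    (ht : transcript alg (row f B b) w (P * k) k h (p * k) = t)
    (ht' : transcript alg (row f B b') w' (P * k) k h (p * k) = t)
    {D D' : Matrix (Fin n) (Fin k) ℤ} (hD : D ∈ coeffBox (Fin k) (revealedRows n t.reports) S)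
    (hD' : D' ∈ coeffBox (Fin k) (revealedRows n t.reports) S)
    (heq : b + D * t.windowGrid hm = b' + D' * t.windowGrid hm) : D = D' := by
  subst hB
  subst ht
  have hpoint := levelPoint_eq_of_transcript_eq hd hm hw hw' hgap ht'.symm
    fun i hi => row_eq_of_mem_revealedRows hD hD' heq hi
  funext i
  refine eq_of_row_shear_eq (f := f) (H := 8 * d ^ 2) (q := k * S) (S := S) (σ := cutDepth d)
    (τ := gridTol d) (η := rowTol d) (v := fun l : Fin k => w (p * k + l))
    (x := fun l : Fin k => levelPoint alg (row f (8 * d ^ 2 * (k * S)) b) w (p * k + l + 1))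
    (Nat.mul_pos hk hS) ?_ ?_ heq (fun l => ?_) (fun l => ?_) (fun l => ?_) (fun l => ?_)
    (fun l l' hl => ?_) ?_
  · unfold gridTol
    positivity
  · exact fun l i => (hw.resistsAt _ (by omega)).apply_eq_zero_of_le (by omega) (hf i)
  · have h₁ := mem_Ico_of_mem_coeffBox hS hD i l
    have h₂ := mem_Ico_of_mem_coeffBox hS hD' i l
    exact abs_le.mpr ⟨by omega, by omega⟩
  · exact hw.abs_inner_levelPoint_le (by omega) i
  · rw [hpoint]
    exact hw'.abs_inner_levelPoint_le (by omega) i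
  · exact le_abs.mpr (Or.inr (le_neg_of_le_neg
      (hw.inner_gridRound_levelPoint_le (Nat.lt_succ_self _) (by omega))))
  · exact hw.abs_inner_gridRound_levelPoint_le (by omega) (by omega) (by omega)
      ((mul_add_div_eq p ⟨l + 1, by omega⟩).trans (mul_add_div_eq p l').symm)
  · simpa using probe_error_lt_cutDepth hS hk hkS

theorem card_mul_pow_le_of_transcript_eq {𝓕 : Finset (Matrix (Fin n) (Fin d) ℤ)}
    {w : Matrix (Fin n) (Fin d) ℤ → ℕ → EuclideanSpace ℝ (Fin d)} (hd : 2 ≤ d) (hk : 0 < k)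
    (hS : 0 < S) (hkS : 2 * (k * S) ≤ d) (hf : ∀ i, 2 * (P * k) ≤ f i)
    (hB : B = 8 * d ^ 2 * (k * S)) (hm : p * k + k ≤ P * k)
    (h𝓕 : ∀ b ∈ 𝓕, b ∈ matrixBox fun _ _ => Finset.Ico 0 (B : ℤ))
    (hw : ∀ b ∈ 𝓕, IsResistingRun alg (row f B b) (w b) k (P * k) τ)
    (hgap : ∀ b ∈ 𝓕, levelTime alg (row f B b) (w b) (p * k + k) <
      levelTime alg (row f B b) (w b) (p * k) + h)
    {t : Transcript d M (P * k) k h}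
    (ht : ∀ b ∈ 𝓕, transcript alg (row f B b) (w b) (P * k) k h (p * k) = t) :
    𝓕.card * S ^ (k * (n - h)) ≤ 9 ^ (k * n) * B ^ (d * n) := by
  rcases 𝓕.eq_empty_or_nonempty with rfl | ⟨b₀, hb₀⟩
  · simp
  have hgrid : ∀ l, t.windowGrid hm l = gridFloor (8 * d ^ 2) (w b₀ (p * k + l)) :=
    fun l => by rw [← ht b₀ hb₀]; rfl
  have hshear := card_mul_pow_le_of_shear (F := t.windowGrid hm) (A := block d k p)
    (R := revealedRows n t.reports) (H := 8 * d ^ 2) hS (by rw [hB, Fintype.card_fin]) h𝓕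
    (fun l c => by
      rw [hgrid]
      exact (hw b₀ hb₀).abs_gridFloor_le (by omega) _ c)
    (fun l c hc => by
      rw [hgrid]
      exact (hw b₀ hb₀).gridFloor_eq_zero (by omega) _ (by rwa [mul_add_div_eq]))
    (fun b hb b' hb' D hD D' hD' => eq_of_add_mul_windowGrid_eq hd hk hS hkS hf hB hm (hw b hb)
      (hw b' hb') (hgap b hb) (ht b hb) (ht b' hb') hD hD')
  simp only [Fintype.card_fin] at hshear
  calc 𝓕.card * S ^ (k * (n - h))
      ≤ 𝓕.card * S ^ (k * (n - (revealedRows n t.reports).card)) := by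
        gcongr
        exact card_revealedRows_le _
    _ ≤ 3 ^ ((block d k p).card * n) * B ^ (d * n) := hshear
    _ ≤ 3 ^ (2 * k * n) * B ^ (d * n) := by
        gcongr
        · norm_num
        · exact card_block_le d k p
    _ = 9 ^ (k * n) * B ^ (d * n) := by
        rw [mul_assoc, pow_mul]
        norm_num

theorem exists_lt_add_of_lt_mul {u : ℕ → ℕ} (hu : u P < P * h) :
    ∃ p < P, u (p + 1) < u p + h := by
  by_contra! hall
  have hle : ∀ m ≤ P, m * h ≤ u m := fun m => by
    induction m with
    | zero => simp
    | succ m ih =>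
      intro hm
      have := hall m hm
      have := ih (by omega)
      rw [add_one_mul]
      omega
  exact (hle P le_rfl).not_gt hu

theorem exists_embedding_fin_of_add_le {m : ℕ} (h : m + n ≤ d) :
    ∃ f : Fin n ↪ Fin d, ∀ i, m ≤ f i :=
  ⟨(Fin.castLEEmb (by omega)).trans Fin.revPerm.toEmbedding, fun i => by
    simp only [Function.Embedding.trans_apply, Fin.coe_castLEEmb, Equiv.coe_toEmbedding,
      Fin.revPerm_apply, Fin.val_rev, Fin.val_castLE]
    omega⟩

theorem exists_isResistingRun_window {T : ℕ} (hd : 2 ≤ d) (hk : 0 < k) (hPd : 2 * (P * k) ≤ d)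
    (hf : ∀ i, 2 * (P * k) ≤ f i) (hT : T - 1 < P * h)
    (hsol : SolvesFeasibility d alg T (1 / (48 * (d : ℝ) ^ 2 * √d)))
    {b : Matrix (Fin n) (Fin d) ℤ} (hb : b ∈ matrixBox fun _ _ => Finset.Ico 0 (B : ℤ)) :
    ∃ w, ∃ p < P, IsResistingRun alg (row f B b) w k (P * k) (T - 1) ∧
      levelTime alg (row f B b) w (p * k + k) < levelTime alg (row f B b) w (p * k) + h := by
  have hb_abs : ∀ i c, |b i c| ≤ B := fun i c => by
    have := Finset.mem_Ico.mp (mem_matrixBox.mp hb i c)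
    exact abs_le.mpr ⟨by omega, this.2.le⟩
  obtain ⟨w, hw⟩ := exists_isResistingRun hd hk hPd hf hb_abs hsol
  obtain ⟨p, hp, hgap⟩ :=
    exists_lt_add_of_lt_mul (u := fun p => levelTime alg (row f B b) w (p * k))
      ((hw.levelTime_le le_rfl).trans_lt hT)
  exact ⟨w, p, hp, hw, by rwa [← add_one_mul]⟩

theorem pow_le_of_solvesFeasibility {T : ℕ} (hd : 2 ≤ d) (hk : 0 < k) (hS : 0 < S)
    (hkS : 2 * (k * S) ≤ d) (hPd : 2 * (P * k) + n ≤ d) (hT : T - 1 < P * h)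
    (hsol : SolvesFeasibility d alg T (1 / (48 * (d : ℝ) ^ 2 * √d))) :
    S ^ (k * (n - h)) ≤ 9 ^ (k * n) * (P * (2 ^ M * (n + P * k + 2) ^ h * h ^ k *
      (16 * d ^ 2 + 1) ^ (2 * k * (P * k)))) := by
  classical
  obtain ⟨f, hf⟩ := exists_embedding_fin_of_add_le hPd
  obtain ⟨B, hB⟩ : ∃ B, B = 8 * d ^ 2 * (k * S) := ⟨_, rfl⟩
  let box : Finset (Matrix (Fin n) (Fin d) ℤ) := matrixBox fun _ _ => Finset.Ico 0 (B : ℤ)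
  have hbox : box.card = B ^ (d * n) := by simp [box, card_matrixBox, pow_mul]
  have hwindow := fun b (hb : b ∈ box) =>
    exists_isResistingRun_window hd hk (by omega) hf hT hsol hb
  choose! w p hp hw hgap using hwindow
  have hm : ∀ p < P, p * k + k ≤ P * k := fun p hp =>
    (add_one_mul p k).symm.trans_le (Nat.mul_le_mul_right k hp)
  let g := fun b => (p b, transcript alg (row f B b) (w b) (P * k) k h (p b * k))
  have hmaps : ∀ b ∈ box, g b ∈ Finset.range P ×ˢ transcriptBox d n M (P * k) k h := fun b hb =>
    Finset.mem_product.mpr ⟨Finset.mem_range.mpr (hp b hb),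
      (hw b hb).transcript_mem_transcriptBox hd (hm _ (hp b hb)) (hgap b hb)⟩
  have hfiber : ∀ y ∈ Finset.range P ×ˢ transcriptBox d n M (P * k) k h,
      (box.filter (g · = y)).card * S ^ (k * (n - h)) ≤ 9 ^ (k * n) * B ^ (d * n) := by
    rintro ⟨p₀, t⟩ hy
    have hmem : ∀ b ∈ box.filter (g · = (p₀, t)), b ∈ box ∧ p b = p₀ ∧
        transcript alg (row f B b) (w b) (P * k) k h (p b * k) = t := fun b hb =>
      (Finset.mem_filter.mp hb).imp_right Prod.mk.inj
    exact card_mul_pow_le_of_transcript_eq (w := w) (t := t) hd hk hS hkS hf hB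
      (hm p₀ (Finset.mem_range.mp (Finset.mem_product.mp hy).1)) (fun b hb => (hmem b hb).1)
      (fun b hb => hw b (hmem b hb).1) (fun b hb => (hmem b hb).2.1 ▸ hgap b (hmem b hb).1)
      (fun b hb => (hmem b hb).2.1 ▸ (hmem b hb).2.2)
  have hcount := card_mul_le_mul_card_of_mapsTo hmaps hfiber
  rw [hbox, Finset.card_product, Finset.card_range, mul_comm (9 ^ (k * n)), mul_assoc] at hcount
  refine (Nat.le_of_mul_le_mul_left hcount (by rw [hB]; positivity)).trans ?_
  gcongr
  exact card_transcriptBox_le d n M (P * k) k h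

end Counting

/-! ### The tradeoff -/

section Tradeoff

variable {d n M T : ℕ}
  {alg : MemAlg M (EuclideanSpace ℝ (Fin d)) (Option (EuclideanSpace ℝ (Fin d)))}

theorem le_pred_of_solvesFeasibility {m : ℕ} (hd : 2 ≤ d) (hm : 2 * m ≤ d)
    (hsol : SolvesFeasibility d alg T (1 / (48 * (d : ℝ) ^ 2 * √d))) : m ≤ T - 1 := by
  obtain ⟨w, hw⟩ := exists_isResistingRun (P := m) (k := 1) (B := 0) (b := 0) hd one_pos
    (f := (Function.Embedding.ofIsEmpty : Fin 0 ↪ Fin d)) (by omega) (fun i => i.elim0)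
    (fun i => i.elim0) hsol
  exact (hw.le_levelTime hd (mul_one m).ge).trans (hw.levelTime_le (mul_one m).ge)

variable {L P k : ℕ}

theorem transcript_bits_lt (hL : 1 ≤ L) (hkL : 2 * L ≤ k) (hnL : 24 * L ≤ n)
    (hM : 4 * M ≤ k * n) (hP : 112 * L * (P * k) ≤ n) :
    4 * (k * n) + (L + (M + L * (n / 2) + L * k + (2 * L + 5) * (2 * k * (P * k)))) <
      10 * (k * (n - n / 2)) := by
  have hhalf : k * n ≤ 2 * (k * (n - n / 2)) := by
    rw [Nat.mul_left_comm]
    exact Nat.mul_le_mul_left k (by omega)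
  have hreports : 4 * (L * (n / 2)) ≤ k * n :=
    calc 4 * (L * (n / 2)) = 2 * L * (2 * (n / 2)) := by ring
      _ ≤ k * n := Nat.mul_le_mul hkL (by omega)
  have hdelays : 24 * (L * k) ≤ k * n := by
    rw [← mul_assoc, mul_comm]
    exact Nat.mul_le_mul_left k hnL
  have hnormals : 8 * ((2 * L + 5) * (2 * k * (P * k))) ≤ k * n :=
    calc 8 * ((2 * L + 5) * (2 * k * (P * k))) ≤ 8 * (7 * L * (2 * k * (P * k))) := by
          gcongr
          omega
      _ = k * (112 * L * (P * k)) := by ring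
      _ ≤ k * n := Nat.mul_le_mul_left k hP
  have hLk : L ≤ L * k := Nat.le_mul_of_pos_right L (by omega)
  have hkn : 0 < k * n := Nat.mul_pos (by omega) (by omega)
  omega

theorem transcript_count_lt (hL : 1 ≤ L) (hdL : d ≤ 2 ^ L) (hn : 2 * n ≤ d) (hkL : 2 * L ≤ k)
    (hnL : 24 * L ≤ n) (hM : 4 * M ≤ k * n) (hP₀ : 0 < P) (hP : 112 * L * (P * k) ≤ n) :
    9 ^ (k * n) * (P * (2 ^ M * (n + P * k + 2) ^ (n / 2) * (n / 2) ^ k *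
      (16 * d ^ 2 + 1) ^ (2 * k * (P * k)))) < 1024 ^ (k * (n - n / 2)) := by
  have hPk : 112 * (P * k) ≤ n := (Nat.mul_le_mul_right _ (by omega)).trans hP
  have hP_le : P ≤ P * k := Nat.le_mul_of_pos_right P (by omega)
  have hk_le : k ≤ P * k := Nat.le_mul_of_pos_left k hP₀
  have hreport : n + P * k + 2 ≤ 2 ^ L := by omega
  have hgrid : 16 * d ^ 2 + 1 ≤ 2 ^ (2 * L + 5) :=
    calc 16 * d ^ 2 + 1 ≤ 32 * d ^ 2 := by nlinarith
      _ ≤ 32 * (2 ^ L) ^ 2 := by gcongr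
      _ = 2 ^ (2 * L + 5) := by ring
  calc 9 ^ (k * n) * (P * (2 ^ M * (n + P * k + 2) ^ (n / 2) * (n / 2) ^ k *
        (16 * d ^ 2 + 1) ^ (2 * k * (P * k))))
      ≤ (2 ^ 4) ^ (k * n) * (2 ^ L * (2 ^ M * (2 ^ L) ^ (n / 2) * (2 ^ L) ^ k *
        (2 ^ (2 * L + 5)) ^ (2 * k * (P * k)))) := by
        gcongr
        · norm_num
        · omega
        · omega
    _ = 2 ^ (4 * (k * n) +
          (L + (M + L * (n / 2) + L * k + (2 * L + 5) * (2 * k * (P * k))))) := by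
        simp only [← pow_mul, ← pow_add]
    _ < 2 ^ (10 * (k * (n - n / 2))) :=
        Nat.pow_lt_pow_right one_lt_two (transcript_bits_lt hL hkL hnL hM hP)
    _ = 1024 ^ (k * (n - n / 2)) := pow_mul 2 10 _

theorem mul_half_lt_of_solvesFeasibility (hL : 12 ≤ L) (hdL : d ≤ 2 ^ L) (hn : 2 * n ≤ d)
    (hkL : 2 * L ≤ k) (hnL : 24 * L ≤ n) (hM : 4 * M ≤ k * n) (hP₀ : 0 < P)
    (hP : 112 * L * (P * k) ≤ n)
    (hsol : SolvesFeasibility d alg T (1 / (48 * (d : ℝ) ^ 2 * √d))) : P * (n / 2) < T := by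
  by_contra! hT
  have hk : k ≤ P * k := Nat.le_mul_of_pos_left k hP₀
  have hPk : 1344 * (P * k) ≤ n := (Nat.mul_le_mul_right _ (by omega)).trans hP
  have hpos : 0 < P * (n / 2) := Nat.mul_pos hP₀ (by omega)
  exact (transcript_count_lt (by omega) hdL hn hkL hnL hM hP₀ hP).not_ge
    (pow_le_of_solvesFeasibility (S := 1024) (by omega) (by omega) (by norm_num) (by omega)
      (by omega) (by omega) hsol)

theorem add_one_mul_le_of_solvesFeasibility (hL : 12 ≤ L) (hdL : d ≤ 2 ^ L) (hn : 2 * n ≤ d)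
    (hkL : 2 * L ≤ k) (hnL : 24 * L ≤ n) (hM : 4 * M ≤ k * n) (hP : 112 * L * (P * k) ≤ n)
    (hsol : SolvesFeasibility d alg T (1 / (48 * (d : ℝ) ^ 2 * √d))) : (P + 1) * n ≤ 6 * T := by
  rcases P.eq_zero_or_pos with rfl | hP₀
  · have hlinear : n ≤ T - 1 := le_pred_of_solvesFeasibility (by omega) hn hsol
    omega
  · calc (P + 1) * n ≤ 2 * P * (3 * (n / 2)) := Nat.mul_le_mul (by omega) (by omega)
      _ = 6 * (P * (n / 2)) := by ring
      _ ≤ 6 * T := Nat.mul_le_mul_left 6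
          (mul_half_lt_of_solvesFeasibility hL hdL hn hkL hnL hM hP₀ hP hsol).le

theorem twelve_le_clog (hd : 4096 ≤ d) : 12 ≤ Nat.clog 2 d :=
  (Nat.lt_clog_iff_pow_lt one_lt_two).mpr (by omega)

theorem two_pow_clog_pred_lt (hd : 4096 ≤ d) : 2 ^ (Nat.clog 2 d - 1) < d :=
  Nat.pow_pred_clog_lt_self one_lt_two (by omega)

theorem mul_clog_le (hd : 4096 ≤ d) : 72 * Nat.clog 2 d ≤ d := by
  have hgrowth : ∀ l, 12 ≤ l → 72 * l ≤ 2 ^ (l - 1) := fun l hl => by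
    induction l, hl using Nat.le_induction with
    | base => norm_num
    | succ l hl ih =>
      rw [Nat.add_sub_cancel, ← mul_pow_sub_one (by omega)]
      omega
  exact (hgrowth _ (twelve_le_clog hd)).trans (two_pow_clog_pred_lt hd).le

theorem one_le_log (hd : 4096 ≤ d) : 1 ≤ Real.log d := by
  have hd' : (4096 : ℝ) ≤ d := by exact_mod_cast hd
  rw [Real.le_log_iff_exp_le (by linarith)]
  linarith [Real.exp_one_lt_d9]

theorem clog_le_two_mul_log (hd : 4096 ≤ d) : (Nat.clog 2 d : ℝ) ≤ 2 * Real.log d := by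
  have hL := twelve_le_clog hd
  have hlog : (Nat.clog 2 d - 1 : ℕ) * Real.log 2 ≤ Real.log d := by
    rw [← Real.log_pow]
    exact Real.log_le_log (by positivity) (by exact_mod_cast (two_pow_clog_pred_lt hd).le)
  rw [Nat.cast_pred (by omega)] at hlog
  have hL' : (12 : ℝ) ≤ Nat.clog 2 d := by exact_mod_cast hL
  nlinarith [Real.log_two_gt_d9]

theorem cube_le_of_solvesFeasibility (hd : 4096 ≤ d)
    (hsol : SolvesFeasibility d alg T (1 / (48 * (d : ℝ) ^ 2 * √d))) :
    d ^ 3 ≤ 12096 * Nat.clog 2 d ^ 2 * (M + d) * T := by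
  obtain ⟨L, hL⟩ : ∃ L, L = Nat.clog 2 d := ⟨_, rfl⟩
  obtain ⟨n, hn⟩ : ∃ n, n = d / 2 := ⟨_, rfl⟩
  obtain ⟨k, hk⟩ : ∃ k, k = 2 * L * (M / d + 1) := ⟨_, rfl⟩
  obtain ⟨P, hP⟩ : ∃ P, P = n / (112 * L * k) := ⟨_, rfl⟩
  have hL12 : 12 ≤ L := hL ▸ twelve_le_clog hd
  have hLd : 72 * L ≤ d := hL ▸ mul_clog_le hd
  have hdL : d ≤ 2 ^ L := hL ▸ Nat.le_pow_clog one_lt_two d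
  have hkL : 2 * L ≤ k := hk ▸ Nat.le_mul_of_pos_right _ (Nat.succ_pos _)
  have hqM : d * (M / d + 1) ≤ M + d := by
    rw [mul_add_one]
    exact Nat.add_le_add_right (Nat.mul_div_le M d) d
  have hM : 4 * M ≤ k * n :=
    calc 4 * M ≤ 4 * (d * (M / d + 1)) :=
          Nat.mul_le_mul_left 4 (Nat.lt_mul_div_succ M (by omega)).le
      _ ≤ 4 * (3 * n * (M / d + 1)) := by
          gcongr
          omega
      _ = 12 * (n * (M / d + 1)) := by ring
      _ ≤ 2 * L * (n * (M / d + 1)) := by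
          gcongr
          omega
      _ = k * n := by rw [hk]; ring
  have hqueries : (P + 1) * n ≤ 6 * T := by
    refine add_one_mul_le_of_solvesFeasibility hL12 hdL (by omega) hkL (by omega) hM ?_ hsol
    rw [Nat.mul_left_comm, hP]
    exact Nat.div_mul_le_self _ _
  have hlevels : n ≤ 112 * L * k * (P + 1) := by
    rw [hP]
    exact (Nat.lt_mul_div_succ n (Nat.mul_pos (by omega) (by omega))).le
  calc d ^ 3 ≤ d * (3 * n) ^ 2 := by
        rw [pow_succ']
        gcongr
        omega
    _ = 9 * d * (n * n) := by ring
    _ ≤ 9 * d * (112 * L * k * (P + 1) * n) := by gcongr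
    _ = 1008 * L * (d * k) * ((P + 1) * n) := by ring
    _ ≤ 1008 * L * (d * k) * (6 * T) := by gcongr
    _ = 12096 * L ^ 2 * (d * (M / d + 1)) * T := by rw [hk]; ring
    _ ≤ 12096 * Nat.clog 2 d ^ 2 * (M + d) * T := by rw [hL]; gcongr

theorem feasibility_memory_query_tradeoff_general (hd : 4096 ≤ d) {δ : ℝ} (hδ : δ ≤ 1)
    (hsol : SolvesFeasibility d alg T (1 / (48 * (d : ℝ) ^ 2 * √d))) :
    (d : ℝ) ^ (2 - δ) ≤ M ∨ 1 / 96768 * (d : ℝ) ^ (1 + δ) / Real.log d ^ 2 ≤ T := by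
  rw [or_iff_not_imp_left, not_le]
  intro hM
  have hd₀ : (0 : ℝ) < d := by exact_mod_cast (show 0 < d by omega)
  have hcube : (d : ℝ) ^ 3 ≤ 12096 * (Nat.clog 2 d : ℝ) ^ 2 * (M + d) * T := by
    exact_mod_cast cube_le_of_solvesFeasibility hd hsol
  have hd_le : (d : ℝ) ≤ (d : ℝ) ^ (2 - δ) :=
    Real.self_le_rpow_of_one_le (by exact_mod_cast (show 1 ≤ d by omega)) (by linarith)
  have hsplit : (d : ℝ) ^ (1 + δ) * (d : ℝ) ^ (2 - δ) = (d : ℝ) ^ 3 := by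
    rw [← Real.rpow_add hd₀, ← Real.rpow_natCast]
    norm_num
  have hlog := one_le_log hd
  rw [div_le_iff₀ (by positivity), one_div, inv_mul_le_iff₀ (by norm_num)]
  refine le_of_mul_le_mul_right ?_ (Real.rpow_pos_of_pos hd₀ (2 - δ))
  calc (d : ℝ) ^ (1 + δ) * (d : ℝ) ^ (2 - δ)
      ≤ 12096 * (Nat.clog 2 d : ℝ) ^ 2 * (M + d) * T := hsplit.trans_le hcube
    _ ≤ 12096 * (2 * Real.log d) ^ 2 * ((d : ℝ) ^ (2 - δ) + (d : ℝ) ^ (2 - δ)) * T := by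
        gcongr
        exact clog_le_two_mul_log hd
    _ = 96768 * (T * Real.log d ^ 2) * (d : ℝ) ^ (2 - δ) := by ring

end Tradeoff

/-- To solve the feasibility problem over the unit ball with accuracy `1/(48 d² √d)`,
any deterministic algorithm either uses at least `d^{2-δ}` bits of memory or makes
at least `Ω(d^{1+δ} / (log d)³)` queries. -/
theorem feasibility_memory_query_tradeoff :
    ∃ c : ℝ, 0 < c ∧ ∃ d₀ : ℕ, ∀ d : ℕ, d₀ ≤ d → ∀ δ : ℝ, 0 ≤ δ → δ ≤ 1 →
      ∀ M T : ℕ,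
        ∀ alg : MemAlg M (EuclideanSpace ℝ (Fin d)) (Option (EuclideanSpace ℝ (Fin d))),
          SolvesFeasibility d alg T (1 / (48 * (d : ℝ) ^ 2 * Real.sqrt d)) →
            (d : ℝ) ^ ((2 : ℝ) - δ) ≤ (M : ℝ) ∨
              c * (d : ℝ) ^ ((1 : ℝ) + δ) / Real.log d ^ 3 ≤ (T : ℝ) := by
  refine ⟨1 / 96768, by norm_num, 4096, fun d hd δ _ hδ M T alg hsol => ?_⟩
  refine (feasibility_memory_query_tradeoff_general hd hδ hsol).imp_right fun h => le_trans ?_ h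
  have hlog := one_le_log hd
  gcongr
  norm_num
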